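/- arXiv:1212.6451 — 3 statements merged into one kernel-verified Lean document; each statement's English description precedes it below -/
import Mathlib

section
/- Let Ψ be a critical branching mechanism and let ν₀ be a nonzero finite Borel measure on (0,∞). Then there exists a unique weak solution (ν_t)_{t>0} of the generalized Smoluchowski equation with initial data ν₀, i.e. a unique weak solution such that ν_t converges weakly to ν₀ as t → 0⁺. -/
open MeasureTheory Set Filter

noncomputable section

/-- A test function: continuous on `(0,∞)`, bounded there, with finite limits
at `0⁺` and at `∞`. -/
def IsTestFun (f : ℝ → ℝ) : Prop :=
  ContinuousOn f (Ioi 0) ∧ (∃ M : ℝ, ∀ x ∈ Ioi (0:ℝ), |f x| ≤ M) ∧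
    (∃ l₀ : ℝ, Tendsto f (nhdsWithin 0 (Ioi 0)) (nhds l₀)) ∧
    (∃ linf : ℝ, Tendsto f atTop (nhds linf))

/-- `I_k(ν,f) = m^{-k} ∫_{(0,∞)^k} [f(x₁+⋯+x_k) - Σᵢ f(xᵢ)] ν(dx₁)⋯ν(dx_k)`,
where `m = ν((0,∞))`. -/
noncomputable def Ik (k : ℕ) (ν : Measure ℝ) (f : ℝ → ℝ) : ℝ :=
  (∫ x : Fin k → ℝ, (f (∑ i, x i) - ∑ i, f (x i))
      ∂(Measure.pi fun _ : Fin k => ν.restrict (Ioi 0))) /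
    ((ν (Ioi 0)).toReal) ^ k

/-- `⟨L(ν), f⟩ = Σ_{k≥2} ((-m)^k Ψ⁽ᵏ⁾(m)/k!) I_k(ν,f)` with `m = ν((0,∞))`. -/
noncomputable def Lform (Ψ : ℝ → ℝ) (ν : Measure ℝ) (f : ℝ → ℝ) : ℝ :=
  ∑' k : ℕ,
    ((-((ν (Ioi 0)).toReal)) ^ (k + 2) * iteratedDeriv (k + 2) Ψ ((ν (Ioi 0)).toReal) /
        ((k + 2).factorial : ℝ)) * Ik (k + 2) ν f

/-- Weak solution of the generalized Smoluchowski equation. -/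
def IsWeakSolution (Ψ : ℝ → ℝ) (ν : ℝ → Measure ℝ) : Prop :=
  ∀ f : ℝ → ℝ, IsTestFun f → ∀ s t : ℝ, 0 < s → 0 < t →
    ∫ x in Ioi (0:ℝ), f x ∂(ν t)
      = (∫ x in Ioi (0:ℝ), f x ∂(ν s)) + ∫ τ in s..t, Lform Ψ (ν τ) f

/-- A weak solution with initial data `ν₀`: a weakly measurable family of
nonzero finite measures on `(0,∞)` solving the weak form, converging weakly to
`ν₀` as `t → 0⁺`. -/
def IsWeakSolutionWithData (Ψ : ℝ → ℝ) (ν₀ : Measure ℝ) (ν : ℝ → Measure ℝ) : Prop :=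
  (∀ t : ℝ, 0 < t → IsFiniteMeasure (ν t) ∧ ν t (Ioi 0) ≠ 0 ∧ ν t (Iic 0) = 0) ∧
  (∀ f : ℝ → ℝ, IsTestFun f → Measurable fun t : ℝ => ∫ x in Ioi (0:ℝ), f x ∂(ν t)) ∧
  IsWeakSolution Ψ ν ∧
  (∀ f : ℝ → ℝ, ContinuousOn f (Ioi 0) → (∃ M : ℝ, ∀ x ∈ Ioi (0:ℝ), |f x| ≤ M) →
    Tendsto (fun t => ∫ x in Ioi (0:ℝ), f x ∂(ν t)) (nhdsWithin 0 (Ioi 0))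
      (nhds (∫ x in Ioi (0:ℝ), f x ∂ν₀)))

open scoped NNReal Topology

def PP (β : ℝ) (μ : Measure ℝ) (u : ℝ) : ℝ :=
  β * u ^ 2 + ∫ x, (Real.exp (-(u * x)) - 1 + u * x) ∂μ

def PD (β : ℝ) (μ : Measure ℝ) (u : ℝ) : ℝ :=
  2 * β * u + ∫ x, x * (1 - Real.exp (-(u * x))) ∂μ

def PA (β : ℝ) (μ : Measure ℝ) (m : ℝ) (k : ℕ) : ℝ :=
  (if k = 2 then β else 0) + (∫ x, x ^ k * Real.exp (-(m * x)) ∂μ) / (k.factorial : ℝ)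

/-- standing assumption on the Lévy measure -/
structure Levy (μ : Measure ℝ) : Prop where
  pos : ∀ᵐ x ∂μ, 0 < x
  int : Integrable (fun x => min x (x ^ 2)) μ

lemma hasSum_cg {f g : ℕ → ℝ} {a b : ℝ} (h : HasSum f a) (e : ∀ k, g k = f k) (e2 : b = a) :
    HasSum g b := by
  rw [e2, funext e]; exact h

lemma exp_aux1 {y : ℝ} (hy : 0 ≤ y) : 1 - Real.exp (-y) ≤ y := by
  linarith [Real.add_one_le_exp (-y)]

lemma exp_aux0 {y : ℝ} : 0 ≤ Real.exp (-y) - 1 + y := by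
  linarith [Real.add_one_le_exp (-y)]

lemma exp_aux2 {y : ℝ} (hy : 0 ≤ y) : Real.exp (-y) - 1 + y ≤ y ^ 2 := by
  have h1 : Real.exp (-y) * Real.exp y = 1 := by rw [← Real.exp_add]; simp
  have h2 := Real.add_one_le_exp y
  have h3 := Real.exp_pos (-y)
  have h4 : Real.exp (-y) ≤ 1 := by rw [Real.exp_le_one_iff]; linarith
  nlinarith

lemma exp_aux3 {y : ℝ} (hy : 0 ≤ y) : Real.exp (-y) ≤ 1 := by
  rw [Real.exp_le_one_iff]; linarith

namespace Levy
variable {μ : Measure ℝ} (h : Levy μ) {β : ℝ}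
include h

lemma dom {f : ℝ → ℝ} (hf : Measurable f) {A B : ℝ} (hA : 0 ≤ A) (hB : 0 ≤ B)
    (h1 : ∀ x, 0 < x → |f x| ≤ A * x) (h2 : ∀ x, 0 < x → |f x| ≤ B * x ^ 2) :
    Integrable f μ := by
  refine (h.int.const_mul (A + B)).mono' hf.aestronglyMeasurable ?_
  filter_upwards [h.pos] with x hx
  rw [Real.norm_eq_abs]
  rcases min_choice x (x ^ 2) with e | e <;> rw [e]
  · have := h1 x hx; nlinarith
  · have := h2 x hx; nlinarith [sq_nonneg x]

lemma int_psi {u : ℝ} (hu : 0 ≤ u) :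
    Integrable (fun x => Real.exp (-(u * x)) - 1 + u * x) μ := by
  refine h.dom (by fun_prop) hu (sq_nonneg u) ?_ ?_ <;> intro x hx <;>
    rw [abs_of_nonneg exp_aux0]
  · linarith [exp_aux3 (mul_nonneg hu hx.le)]
  · nlinarith [exp_aux2 (mul_nonneg hu hx.le)]

lemma int_pd {u : ℝ} (hu : 0 ≤ u) :
    Integrable (fun x => x * (1 - Real.exp (-(u * x)))) μ := by
  refine h.dom (by fun_prop) zero_le_one hu ?_ ?_ <;> intro x hx <;>
    have h1 := exp_aux3 (mul_nonneg hu hx.le) <;>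
    rw [abs_of_nonneg (mul_nonneg hx.le (by linarith))]
  · nlinarith [Real.exp_pos (-(u * x))]
  · nlinarith [exp_aux1 (mul_nonneg hu hx.le)]

lemma pow_exp_le {m x : ℝ} (hm : 0 < m) (hx : 0 < x) (k : ℕ) :
    x ^ k * Real.exp (-(m * x)) ≤ k.factorial / m ^ k := by
  have h1 := Real.pow_div_factorial_le_exp (m * x) (mul_pos hm hx).le k
  have h2 : Real.exp (-(m * x)) * Real.exp (m * x) = 1 := by rw [← Real.exp_add]; simp
  have h3 := Real.exp_pos (-(m * x))
  have h5 : (0:ℝ) < k.factorial := by positivity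
  rw [le_div_iff₀ (by positivity)]
  rw [div_le_iff₀ h5, mul_pow] at h1
  calc x ^ k * Real.exp (-(m * x)) * m ^ k = Real.exp (-(m * x)) * (m ^ k * x ^ k) := by ring
    _ ≤ Real.exp (-(m * x)) * (Real.exp (m * x) * k.factorial) := by gcongr
    _ = k.factorial := by rw [← mul_assoc, h2, one_mul]

lemma int_pow {m : ℝ} (hm : 0 < m) (k : ℕ) :
    Integrable (fun x => x ^ (k + 2) * Real.exp (-(m * x))) μ := by
  refine h.dom (by fun_prop) (A := (k+1).factorial / m ^ (k+1)) (B := k.factorial / m ^ k)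
    (by positivity) (by positivity) ?_ ?_ <;> intro x hx <;>
    rw [abs_of_nonneg (by positivity)]
  · have := h.pow_exp_le hm hx (k+1)
    calc _ = x ^ (k+1) * Real.exp (-(m * x)) * x := by ring
      _ ≤ _ := by gcongr
  · have := h.pow_exp_le hm hx k
    calc _ = x ^ k * Real.exp (-(m * x)) * x ^ 2 := by ring
      _ ≤ _ := by gcongr

lemma PP_zero : PP β μ 0 = 0 := by simp [PP]

lemma PP_mono (hβ : 0 ≤ β) {u v : ℝ} (hu : 0 ≤ u) (huv : u ≤ v) : PP β μ u ≤ PP β μ v := by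
  unfold PP
  refine add_le_add (by gcongr) (integral_mono_ae (h.int_psi hu) (h.int_psi (hu.trans huv)) ?_)
  · filter_upwards [h.pos] with x hx
    have h1 := exp_aux1 (mul_nonneg (sub_nonneg.2 huv) hx.le)
    have h2 : Real.exp (-(v * x)) = Real.exp (-(u * x)) * Real.exp (-((v - u) * x)) := by
      rw [← Real.exp_add]; ring_nf
    have h3 := exp_aux3 (mul_nonneg hu hx.le)
    have h4 := Real.exp_pos (-(u * x))
    have h5 := exp_aux3 (mul_nonneg (sub_nonneg.2 huv) hx.le)
    nlinarith

lemma PP_nonneg (hβ : 0 ≤ β) {u : ℝ} (hu : 0 ≤ u) : 0 ≤ PP β μ u := by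
  have := h.PP_mono hβ le_rfl hu
  rwa [h.PP_zero] at this

lemma PD_mono (hβ : 0 ≤ β) {u v : ℝ} (hu : 0 ≤ u) (huv : u ≤ v) : PD β μ u ≤ PD β μ v := by
  unfold PD
  refine add_le_add (by gcongr) (integral_mono_ae (h.int_pd hu) (h.int_pd (hu.trans huv)) ?_)
  · filter_upwards [h.pos] with x hx
    gcongr

lemma PD_nonneg (hβ : 0 ≤ β) {u : ℝ} (hu : 0 ≤ u) : 0 ≤ PD β μ u := by
  have := h.PD_mono hβ le_rfl hu
  simpa [PD] using this

lemma PP_sub_le (hβ : 0 ≤ β) {u v : ℝ} (hu : 0 ≤ u) (huv : u ≤ v) :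
    PP β μ v - PP β μ u ≤ PD β μ v * (v - u) := by
  unfold PP PD
  have : (∫ x, (Real.exp (-(v * x)) - 1 + v * x) ∂μ) - ∫ x, (Real.exp (-(u * x)) - 1 + u * x) ∂μ
      ≤ (∫ x, x * (1 - Real.exp (-(v * x))) ∂μ) * (v - u) := by
    rw [← integral_sub (h.int_psi (hu.trans huv)) (h.int_psi hu), ← integral_mul_const]
    refine integral_mono_ae ((h.int_psi (hu.trans huv)).sub (h.int_psi hu))
      ((h.int_pd (hu.trans huv)).mul_const _) ?_
    filter_upwards [h.pos] with x hx
    have h1 := Real.add_one_le_exp ((v - u) * x)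
    have h2 : Real.exp (-(u * x)) = Real.exp (-(v * x)) * Real.exp (((v - u) * x)) := by
      rw [← Real.exp_add]; ring_nf
    have h4 := Real.exp_pos (-(v * x))
    nlinarith
  nlinarith [mul_nonneg hβ (sq_nonneg (v - u))]

lemma PA_nonneg (hβ : 0 ≤ β) (m : ℝ) (k : ℕ) : 0 ≤ PA β μ m k := by
  unfold PA
  have : 0 ≤ ∫ x, x ^ k * Real.exp (-(m * x)) ∂μ := by
    apply integral_nonneg_of_ae
    filter_upwards [h.pos] with x hx
    simp only [Pi.zero_apply]; positivity
  split_ifs <;> positivity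

lemma hasDerivAt_PP {u : ℝ} (hu : 0 < u) : HasDerivAt (PP β μ) (PD β μ u) u := by
  have key := (hasDerivAt_integral_of_dominated_loc_of_deriv_le (μ := μ) (𝕜 := ℝ)
    (F := fun u x => Real.exp (-(u * x)) - 1 + u * x)
    (F' := fun u x => x * (1 - Real.exp (-(u * x)))) (x₀ := u) (s := Ioo 0 (2 * u))
    (bound := fun x => x * (1 - Real.exp (-(2 * u * x))))
    (Ioo_mem_nhds hu (by linarith)) (Eventually.of_forall fun v => by fun_prop)
    (h.int_psi hu.le) (by fun_prop) ?_ (h.int_pd (by linarith)) ?_).2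
  · have h2 : HasDerivAt (fun u : ℝ => β * u ^ 2) (2 * β * u) u := by
      exact ((_root_.hasDerivAt_pow 2 u).const_mul β).congr_deriv (by push_cast; ring)
    exact h2.add key
  · filter_upwards [h.pos] with x hx v hv
    have := exp_aux3 (mul_nonneg hv.1.le hx.le)
    rw [Real.norm_of_nonneg (mul_nonneg hx.le (by linarith))]
    have := hv.2.le
    gcongr
  · filter_upwards with x v hv
    have h1 : HasDerivAt (fun u : ℝ => u * x) x v := by simpa using (hasDerivAt_id v).mul_const x
    have h3 : HasDerivAt (fun u : ℝ => Real.exp (-(u * x))) (Real.exp (-(v * x)) * (-x)) v := h1.neg.exp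
    exact ((h3.sub_const 1).add h1).congr_deriv (by ring)

lemma hasDerivAt_PD {u : ℝ} (hu : 0 < u) :
    HasDerivAt (PD β μ) (2 * β + ∫ x, x ^ 2 * Real.exp (-(u * x)) ∂μ) u := by
  have key := (hasDerivAt_integral_of_dominated_loc_of_deriv_le (μ := μ) (𝕜 := ℝ)
    (F := fun u x => x * (1 - Real.exp (-(u * x))))
    (F' := fun u x => x ^ 2 * Real.exp (-(u * x))) (x₀ := u) (s := Ioi (u / 2))
    (bound := fun x => x ^ 2 * Real.exp (-(u / 2 * x)))
    (Ioi_mem_nhds (by linarith)) (Eventually.of_forall fun v => by fun_prop)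
    (h.int_pd hu.le) (by fun_prop) ?_ (h.int_pow (by linarith) 0) ?_).2
  · have h2 : HasDerivAt (fun u : ℝ => 2 * β * u) (2 * β) u := by
      simpa using (hasDerivAt_id u).const_mul (2 * β)
    exact h2.add key
  · filter_upwards [h.pos] with x hx v hv
    rw [Real.norm_of_nonneg (by positivity)]
    have := (mem_Ioi.1 hv).le
    gcongr
  · filter_upwards with x v hv
    have h1 : HasDerivAt (fun u : ℝ => u * x) x v := by simpa using (hasDerivAt_id v).mul_const x
    have h3 : HasDerivAt (fun u : ℝ => Real.exp (-(u * x))) (Real.exp (-(v * x)) * (-x)) v := h1.neg.exp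
    exact ((h3.const_sub 1).const_mul x).congr_deriv (by ring)

lemma hasDerivAt_pow {u : ℝ} (hu : 0 < u) (k : ℕ) :
    HasDerivAt (fun u => ∫ x, x ^ (k + 2) * Real.exp (-(u * x)) ∂μ)
      (- ∫ x, x ^ (k + 3) * Real.exp (-(u * x)) ∂μ) u := by
  have key := (hasDerivAt_integral_of_dominated_loc_of_deriv_le (μ := μ) (𝕜 := ℝ)
    (F := fun u x => x ^ (k + 2) * Real.exp (-(u * x)))
    (F' := fun u x => - (x ^ (k + 3) * Real.exp (-(u * x)))) (x₀ := u) (s := Ioi (u / 2))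
    (bound := fun x => x ^ (k + 3) * Real.exp (-(u / 2 * x)))
    (Ioi_mem_nhds (by linarith)) (Eventually.of_forall fun v => by fun_prop)
    (h.int_pow hu k) (by fun_prop) ?_ (h.int_pow (by linarith) (k+1)) ?_).2
  · rwa [integral_neg] at key
  · filter_upwards [h.pos] with x hx v hv
    rw [norm_neg, Real.norm_of_nonneg (by positivity)]
    have := (mem_Ioi.1 hv).le
    gcongr
  · filter_upwards with x v hv
    have h1 : HasDerivAt (fun u : ℝ => u * x) x v := by simpa using (hasDerivAt_id v).mul_const x
    have h3 : HasDerivAt (fun u : ℝ => Real.exp (-(u * x))) (Real.exp (-(v * x)) * (-x)) v := h1.neg.exp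
    exact (h3.const_mul (x ^ (k + 2))).congr_deriv (by ring)

lemma iteratedDeriv_PP (Ψ : ℝ → ℝ) (hΨ : ∀ u, 0 < u → Ψ u = PP β μ u) (k : ℕ) :
    ∀ m : ℝ, 0 < m → iteratedDeriv (k + 2) Ψ m =
      (-1) ^ (k + 2) * (k + 2).factorial * PA β μ m (k + 2) := by
  have hev : ∀ m : ℝ, 0 < m → ∀ᶠ u in nhds m, 0 < u := fun m hm => Ioi_mem_nhds hm
  have d1 : ∀ m : ℝ, 0 < m → deriv Ψ m = PD β μ m := fun m hm => by
    have : Ψ =ᶠ[nhds m] PP β μ := (hev m hm).mono hΨ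
    rw [this.deriv_eq, (h.hasDerivAt_PP hm).deriv]
  have d2 : ∀ m : ℝ, 0 < m → iteratedDeriv 2 Ψ m =
      2 * β + ∫ x, x ^ 2 * Real.exp (-(m * x)) ∂μ := fun m hm => by
    rw [iteratedDeriv_succ, iteratedDeriv_one]
    have : deriv Ψ =ᶠ[nhds m] PD β μ := (hev m hm).mono d1
    rw [this.deriv_eq, (h.hasDerivAt_PD hm).deriv]
  have d3 : ∀ k : ℕ, ∀ m : ℝ, 0 < m → iteratedDeriv (k + 2) Ψ m =
      (if k = 0 then 2 * β else 0) + (-1) ^ k * ∫ x, x ^ (k + 2) * Real.exp (-(m * x)) ∂μ := by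
    intro k
    induction k with
    | zero => intro m hm; simp [d2 m hm]
    | succ k ih =>
      intro m hm
      rw [show k + 1 + 2 = (k + 2) + 1 from rfl, iteratedDeriv_succ]
      have : iteratedDeriv (k + 2) Ψ =ᶠ[nhds m] _ := (hev m hm).mono ih
      rw [this.deriv_eq, (((h.hasDerivAt_pow hm k).const_mul ((-1 : ℝ) ^ k)).const_add _).deriv]
      simp [pow_succ]
  intro m hm
  rw [d3 k m hm, PA]
  have : ((k + 2).factorial : ℝ) ≠ 0 := by positivity
  rcases Nat.eq_zero_or_pos k with rfl | hk
  · simp; ring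
  · have : k ≠ 0 := by omega
    simp only [this, if_false, show ¬ (k + 2 = 2) by omega]
    field_simp
    ring

lemma PA_eq (m w : ℝ) (k : ℕ) : PA β μ m (k + 2) * w ^ (k + 2) = (if k = 0 then β * w ^ 2 else 0)
      + ∫ x, (w * x) ^ (k + 2) / (k + 2).factorial * Real.exp (-(m * x)) ∂μ := by
  have : (∫ x, (w * x) ^ (k + 2) / (k + 2).factorial * Real.exp (-(m * x)) ∂μ) =
      (∫ x, x ^ (k + 2) * Real.exp (-(m * x)) ∂μ) * (w ^ (k + 2) / (k + 2).factorial) := by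
    rw [← integral_mul_const]
    congr 1; ext x; rw [mul_pow]; ring
  rw [this, PA]
  rcases Nat.eq_zero_or_pos k with rfl | hk
  · simp; ring
  · have : k ≠ 0 := by omega
    simp only [this, if_false, show ¬ (k + 2 = 2) by omega]
    ring

lemma exp_series (y : ℝ) : HasSum (fun k : ℕ => y ^ (k + 2) / (k + 2).factorial)
    (Real.exp y - 1 - y) := by
  have h1 := NormedSpace.expSeries_div_hasSum_exp (𝔸 := ℝ) y
  rw [← Real.exp_eq_exp_ℝ] at h1
  have := (hasSum_nat_add_iff' 2).2 h1
  simpa [Finset.sum_range_succ, sub_sub] using this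

lemma int_term {m : ℝ} (hm : 0 < m) (w : ℝ) (k : ℕ) : Integrable
    (fun x => (w * x) ^ (k + 2) / (k + 2).factorial * Real.exp (-(m * x))) μ := by
  convert (h.int_pow hm k).mul_const (w ^ (k + 2) / (k + 2).factorial) using 1
  ext x; rw [mul_pow]; ring

lemma hasSum_nonneg_int {F : ℕ → ℝ → ℝ} {G : ℝ → ℝ} (hF : ∀ k, Integrable (F k) μ)
    (hpos : ∀ k, ∀ x, 0 < x → 0 ≤ F k x) (hG : Integrable G μ)
    (hs : ∀ x, 0 < x → HasSum (fun k => F k x) (G x)) :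
    HasSum (fun k => ∫ x, F k x ∂μ) (∫ x, G x ∂μ) := by
  have e : ∫ x, G x ∂μ = ∫ x, ∑' k, F k x ∂μ := by
    apply integral_congr_ae
    filter_upwards [h.pos] with x hx using (hs x hx).tsum_eq.symm
  rw [e]
  apply hasSum_integral_of_summable_integral_norm hF
  refine summable_of_sum_range_le (c := ∫ x, G x ∂μ) (fun k => integral_nonneg fun _ => norm_nonneg _) ?_
  intro n
  rw [← integral_finsetSum _ fun k _ => (hF k).norm]
  refine integral_mono_ae (integrable_finsetSum _ fun k _ => (hF k).norm) hG ?_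
  filter_upwards [h.pos] with x hx
  calc ∑ k ∈ Finset.range n, ‖F k x‖ = ∑ k ∈ Finset.range n, F k x :=
        Finset.sum_congr rfl fun k _ => Real.norm_of_nonneg (hpos k x hx)
    _ ≤ G x := sum_le_hasSum _ (fun k _ => hpos k x hx) (hs x hx)

lemma hasSum_taylor {m w : ℝ} (hm : 0 < m) (hw : 0 ≤ w) (hwm : w ≤ m) :
    HasSum (fun k : ℕ => PA β μ m (k + 2) * w ^ (k + 2))
      (PP β μ (m - w) - PP β μ m + w * PD β μ m) := by
  simp_rw [h.PA_eq]
  have i1 := h.int_psi (u := m - w) (by linarith)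
  have i2 := h.int_psi hm.le
  have i3 := (h.int_pd hm.le).const_mul w
  have i12 := i1.sub i2
  have i123 := i12.add i3
  have e : PP β μ (m - w) - PP β μ m + w * PD β μ m = β * w ^ 2 +
      ∫ x, ((Real.exp (-((m - w) * x)) - 1 + (m - w) * x) - (Real.exp (-(m * x)) - 1 + m * x))
        + w * (x * (1 - Real.exp (-(m * x)))) ∂μ := by
    have := integral_add i12 i3
    simp only [Pi.sub_apply] at this
    rw [this, integral_sub i1 i2, integral_const_mul]
    unfold PP PD; ring
  rw [e]
  refine HasSum.add (hasSum_ite_eq 0 _) (h.hasSum_nonneg_int (h.int_term hm w) ?_ i123 ?_)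
  · intro k x hx; positivity
  · intro x hx
    refine hasSum_cg ((h.exp_series (w * x)).mul_right (Real.exp (-(m * x)))) (fun _ => rfl) ?_
    have : Real.exp (-((m - w) * x)) = Real.exp (w * x) * Real.exp (-(m * x)) := by
      rw [← Real.exp_add]; ring_nf
    rw [this]; ring

lemma hasSum_taylor' {m : ℝ} (hm : 0 < m) :
    HasSum (fun k : ℕ => ((k + 2 : ℕ) : ℝ) * (PA β μ m (k + 2) * m ^ (k + 2)))
      (m * PD β μ m) := by
  simp_rw [h.PA_eq]
  have i3 := (h.int_pd hm.le).const_mul m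
  have e : m * PD β μ m = 2 * β * m ^ 2 + ∫ x, m * (x * (1 - Real.exp (-(m * x)))) ∂μ := by
    rw [integral_const_mul]
    unfold PD; ring
  rw [e]
  simp_rw [mul_add, ← integral_const_mul]
  refine HasSum.add ?_ (h.hasSum_nonneg_int (fun k => (h.int_term hm m k).const_mul _) ?_ i3 ?_)
  · convert hasSum_ite_eq (0:ℕ) (2 * β * m ^ 2) using 2 with k
    split_ifs with hk
    · subst hk; simp; ring
    · simp
  · intro k x hx; positivity
  · intro x hx
    have h1 := NormedSpace.expSeries_div_hasSum_exp (𝔸 := ℝ) (m * x)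
    rw [← Real.exp_eq_exp_ℝ] at h1
    have h2 := (hasSum_nat_add_iff' 1).2 h1
    simp only [Finset.sum_range_one, pow_zero, Nat.factorial_zero, Nat.cast_one, div_one] at h2
    refine hasSum_cg (h2.mul_left (m * x * Real.exp (-(m * x)))) ?_ ?_
    · intro k
      rw [show k + 2 = (k + 1) + 1 from rfl, Nat.factorial_succ]
      push_cast
      field_simp
      ring
    · have : Real.exp (m * x) * Real.exp (-(m * x)) = 1 := by
        rw [← Real.exp_add]; simp
      linear_combination (-m * x) * this

end Levy

/-- Global existence for a bounded Lipschitz scalar field. -/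
lemma ode_local {Q : ℝ → ℝ} {K B : ℝ≥0} (hQ : LipschitzWith K Q) (hB : ∀ y, |Q y| ≤ B) (x : ℝ)
    (T : ℝ) (hT : 0 < T) : ∃ α : ℝ → ℝ, α 0 = x ∧ ∀ t ∈ Ioo (-T) T, HasDerivAt α (-Q (α t)) t := by
  have hpl : IsPicardLindelof (fun _ y => -Q y) (tmin := -T) (tmax := T)
      ⟨0, by constructor <;> linarith⟩ x (B * T.toNNReal) 0 B K := by
    constructor
    · intro t _
      exact (hQ.neg).lipschitzOnWith
    · intro y _; exact continuousOn_const
    · intro t _ y _; simpa using hB y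
    · simp [hT.le]
  obtain ⟨α, h0, h⟩ := hpl.exists_eq_forall_mem_Icc_hasDerivWithinAt₀
  exact ⟨α, h0, fun t ht => (h t (Ioo_subset_Icc_self ht)).hasDerivAt (Icc_mem_nhds ht.1 ht.2)⟩

lemma ode_global {Q : ℝ → ℝ} {K B : ℝ≥0} (hQ : LipschitzWith K Q) (hB : ∀ y, |Q y| ≤ B) (x : ℝ) :
    ∃ α : ℝ → ℝ, α 0 = x ∧ ∀ t, HasDerivAt α (-Q (α t)) t := by
  choose α h0 h using fun n : ℕ => ode_local hQ hB x ((n : ℝ) + 1) (by positivity)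
  have hn : ∀ t : ℝ, |t| < (⌈|t|⌉₊ : ℝ) + 1 := fun t => by
    linarith [Nat.le_ceil |t|]
  have key : ∀ (n k : ℕ) (t : ℝ), |t| < (n : ℝ) + 1 → |t| < (k : ℝ) + 1 → α n t = α k t := by
    intro n k t h1 h2
    set a := min ((n : ℝ) + 1) ((k : ℝ) + 1) with ha
    have ha0 : 0 < a := by positivity
    have s1 : ∀ s ∈ Ioo (-a) a, s ∈ Ioo (-((n : ℝ) + 1)) ((n : ℝ) + 1) := fun s hs => by
      have := min_le_left ((n : ℝ) + 1) ((k : ℝ) + 1)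
      constructor <;> linarith [hs.1, hs.2]
    have s2 : ∀ s ∈ Ioo (-a) a, s ∈ Ioo (-((k : ℝ) + 1)) ((k : ℝ) + 1) := fun s hs => by
      have := min_le_right ((n : ℝ) + 1) ((k : ℝ) + 1)
      constructor <;> linarith [hs.1, hs.2]
    refine ODE_solution_unique_of_mem_Ioo (v := fun _ y => -Q y) (s := fun _ => univ) (K := K)
      (a := -a) (b := a) (t₀ := 0) (fun t _ => hQ.neg.lipschitzOnWith)
      ⟨by linarith, ha0⟩ (fun s hs => ⟨h n s (s1 s hs), trivial⟩)
      (fun s hs => ⟨h k s (s2 s hs), trivial⟩) (by rw [h0, h0]) ?_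
    exact abs_lt.1 (lt_min h1 h2)
  refine ⟨fun t => α ⌈|t|⌉₊ t, h0 _, fun t => ?_⟩
  refine (h ⌈|t|⌉₊ t (abs_lt.1 (hn t))).congr_of_eventuallyEq ?_
  have : ∀ᶠ s in 𝓝 t, |s| < (⌈|t|⌉₊ : ℝ) + 1 :=
    (continuous_abs.tendsto t).eventually (gt_mem_nhds (hn t))
  filter_upwards [this] with s hs
  exact key _ _ s (hn s) hs

/-- Euler scheme. -/
def euler (Q : ℝ → ℝ) (h : ℝ) (y : ℝ) : ℝ := y - h * Q y

lemma euler_nonexp {Q : ℝ → ℝ} {K : ℝ≥0} (hQ : LipschitzWith K Q) (hm : Monotone Q) {h : ℝ}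
    (h0 : 0 ≤ h) (hK : h * K ≤ 1) (x y : ℝ) : |euler Q h x - euler Q h y| ≤ |x - y| := by
  wlog hxy : x ≤ y generalizing x y
  · rw [abs_sub_comm, abs_sub_comm x]; exact this y x (le_of_not_ge hxy)
  have h1 := hm hxy
  have h2 := hQ.dist_le_mul x y
  rw [Real.dist_eq, Real.dist_eq, abs_sub_comm, abs_of_nonneg (by linarith), abs_sub_comm,
    abs_of_nonneg (by linarith)] at h2
  rw [abs_sub_comm x, abs_of_nonneg (sub_nonneg.2 hxy)]
  unfold euler
  rw [abs_le]
  constructor <;> nlinarith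

lemma euler_local {Q : ℝ → ℝ} {K B : ℝ≥0} (hQ : LipschitzWith K Q) (hB : ∀ y, |Q y| ≤ B)
    {u : ℝ → ℝ} (hu : ∀ t, HasDerivAt u (-Q (u t)) t) (s : ℝ) {h : ℝ} (h0 : 0 ≤ h) :
    |u (s + h) - euler Q h (u s)| ≤ K * B * h * h := by
  have lip : ∀ a b, |u a - u b| ≤ B * |a - b| := fun a b => by
    have := Convex.norm_image_sub_le_of_norm_hasDerivWithin_le (f := u) (s := univ) (x := b) (y := a)
      (C := B) (fun t _ => (hu t).hasDerivWithinAt) (fun t _ => by simpa using hB (u t)) convex_univ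
      trivial trivial
    simpa using this
  have hg : ∀ t, HasDerivAt (fun t => u t + t * Q (u s)) (-Q (u t) + Q (u s)) t := fun t => by
    have := (hu t).add ((hasDerivAt_id t).mul_const (Q (u s)))
    exact this.congr_deriv (by simp)
  have := Convex.norm_image_sub_le_of_norm_hasDerivWithin_le (f := fun t => u t + t * Q (u s))
    (s := Icc s (s + h)) (x := s) (y := s + h)
      (C := K * B * h) (fun t _ => (hg t).hasDerivWithinAt) ?_ (convex_Icc _ _)
      ⟨le_rfl, by linarith⟩ ⟨by linarith, le_rfl⟩
  · simp only [Real.norm_eq_abs, add_sub_cancel_left, abs_of_nonneg h0] at this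
    refine le_trans (le_of_eq ?_) this
    unfold euler; congr 1; ring
  · intro t ht
    have h1 := hQ.dist_le_mul (u s) (u t)
    rw [Real.dist_eq, Real.dist_eq] at h1
    rw [Real.norm_eq_abs, neg_add_eq_sub]
    refine h1.trans ?_
    rw [mul_assoc]
    refine mul_le_mul_of_nonneg_left ((lip s t).trans ?_) K.2
    refine mul_le_mul_of_nonneg_left ?_ B.2
    rw [abs_le]; constructor <;> linarith [ht.1, ht.2]

lemma euler_tendsto {Q : ℝ → ℝ} {K B : ℝ≥0} (hQ : LipschitzWith K Q) (hm : Monotone Q)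
    (hB : ∀ y, |Q y| ≤ B)
    {u : ℝ → ℝ} (hu : ∀ t, HasDerivAt u (-Q (u t)) t) {t : ℝ} (ht : 0 ≤ t) :
    Tendsto (fun n : ℕ => (euler Q (t / n))^[n] (u 0)) atTop (𝓝 (u t)) := by
  have step : ∀ h : ℝ, 0 ≤ h → h * K ≤ 1 → ∀ n : ℕ,
      |u (n * h) - (euler Q h)^[n] (u 0)| ≤ n * (K * B * h * h) := by
    intro h h0 hK n
    induction n with
    | zero => simp
    | succ n ih =>
      rw [Function.iterate_succ_apply']
      have e1 := euler_local hQ hB hu (n * h) h0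
      have e2 := euler_nonexp hQ hm h0 hK (u (n * h)) ((euler Q h)^[n] (u 0))
      have e3 : ((n + 1 : ℕ) : ℝ) * h = n * h + h := by push_cast; ring
      rw [e3]
      calc _ ≤ _ := abs_sub_le _ (euler Q h (u (n * h))) _
        _ ≤ K * B * h * h + n * (K * B * h * h) := add_le_add e1 (e2.trans ih)
        _ = _ := by push_cast; ring
  rw [tendsto_iff_dist_tendsto_zero]
  have hlim : Tendsto (fun n : ℕ => (K * B * t * t : ℝ) / n) atTop (𝓝 0) :=
    tendsto_const_div_atTop_nhds_zero_nat _
  have hlim2 : Tendsto (fun n : ℕ => (t / n : ℝ) * K) atTop (𝓝 0) := by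
    simpa using (tendsto_const_div_atTop_nhds_zero_nat t).mul_const (K : ℝ)
  refine squeeze_zero' (Eventually.of_forall fun _ => dist_nonneg) ?_ hlim
  filter_upwards [eventually_gt_atTop 0, hlim2.eventually (ge_mem_nhds zero_lt_one)] with n hn hK
  have hn' : (0:ℝ) < n := by exact_mod_cast hn
  have := step (t / n) (by positivity) hK n
  rw [mul_div_cancel₀ _ hn'.ne', abs_sub_comm] at this
  rw [Real.dist_eq]
  refine this.trans (le_of_eq ?_)
  field_simp

/-- power series with nonnegative coefficients on `[0,R)` -/
def AM (R : ℝ) (g : ℝ → ℝ) : Prop :=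
  ∃ c : ℕ → ℝ, (∀ k, 0 ≤ c k) ∧ ∀ z, 0 ≤ z → z < R → HasSum (fun k => c k * z ^ k) (g z)

namespace AM
variable {R : ℝ} {f g : ℝ → ℝ}

lemma congr (hf : AM R f) (h : ∀ z, 0 ≤ z → z < R → g z = f z) : AM R g := by
  obtain ⟨c, hc, hs⟩ := hf
  exact ⟨c, hc, fun z h0 h1 => by rw [h z h0 h1]; exact hs z h0 h1⟩

lemma id : AM R (fun z => z) := by
  refine ⟨fun k => if k = 1 then 1 else 0, fun k => by dsimp only; split_ifs <;> norm_num, fun z _ _ => ?_⟩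
  refine hasSum_cg (hasSum_ite_eq (1:ℕ) z) (fun k => ?_) rfl
  split_ifs with h <;> simp [h]

lemma const {a : ℝ} (ha : 0 ≤ a) : AM R (fun _ => a) := by
  refine ⟨fun k => if k = 0 then a else 0, fun k => by dsimp only; split_ifs <;> simp [ha], fun z _ _ => ?_⟩
  refine hasSum_cg (hasSum_ite_eq (0:ℕ) a) (fun k => ?_) rfl
  split_ifs with h <;> simp [h]

lemma add (hf : AM R f) (hg : AM R g) : AM R (fun z => f z + g z) := by
  obtain ⟨c, hc, hs⟩ := hf
  obtain ⟨d, hd, ht⟩ := hg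
  refine ⟨fun k => c k + d k, fun k => add_nonneg (hc k) (hd k), fun z h0 h1 => ?_⟩
  exact hasSum_cg ((hs z h0 h1).add (ht z h0 h1)) (fun k => by ring) rfl

lemma mul (hf : AM R f) (hg : AM R g) : AM R (fun z => f z * g z) := by
  obtain ⟨c, hc, hs⟩ := hf
  obtain ⟨d, hd, ht⟩ := hg
  refine ⟨fun k => ∑ p ∈ Finset.HasAntidiagonal.antidiagonal k, c p.1 * d p.2,
    fun k => Finset.sum_nonneg fun p _ => mul_nonneg (hc _) (hd _), fun z h0 h1 => ?_⟩
  have n1 : Summable fun k => ‖c k * z ^ k‖ := (hs z h0 h1).summable.norm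
  have n2 : Summable fun k => ‖d k * z ^ k‖ := (ht z h0 h1).summable.norm
  have e := tsum_mul_tsum_eq_tsum_sum_antidiagonal_of_summable_norm n1 n2
  have s := (summable_norm_sum_mul_antidiagonal_of_summable_norm n1 n2).of_norm
  rw [(hs z h0 h1).tsum_eq, (ht z h0 h1).tsum_eq] at e
  refine hasSum_cg s.hasSum (fun k => ?_) e
  rw [Finset.sum_mul]
  refine Finset.sum_congr rfl fun p hp => ?_
  rw [← Finset.HasAntidiagonal.mem_antidiagonal.1 hp, pow_add]; ring

lemma pow (hf : AM R f) (n : ℕ) : AM R (fun z => f z ^ n) := by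
  induction n with
  | zero => simpa using const (R := R) zero_le_one
  | succ n ih => simpa [pow_succ] using ih.mul hf

lemma finset_sum {F : ℕ → ℝ → ℝ} (hF : ∀ n, AM R (F n)) (n : ℕ) :
    AM R (fun z => ∑ k ∈ Finset.range n, F k z) := by
  induction n with
  | zero => simpa using const (R := R) le_rfl
  | succ n ih => simpa [Finset.sum_range_succ] using ih.add (hF n)

lemma limit (hR : 0 < R) {F : ℕ → ℝ → ℝ} (hF : ∀ n, AM R (F n))
    (hlim : ∀ z, 0 ≤ z → z < R → Tendsto (fun n => F n z) atTop (𝓝 (g z))) : AM R g := by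
  choose c hc hs using hF
  have bd : ∀ z, 0 ≤ z → z < R → ∃ B, ∀ n, F n z ≤ B := fun z h0 h1 => by
    obtain ⟨B, hB⟩ := (hlim z h0 h1).bddAbove_range
    exact ⟨B, fun n => hB ⟨n, rfl⟩⟩
  have cz : ∀ z, 0 ≤ z → z < R → ∀ n k, c n k * z ^ k ≤ F n z := fun z h0 h1 n k =>
    le_hasSum (hs n z h0 h1) k fun j _ => mul_nonneg (hc n j) (pow_nonneg h0 j)
  obtain ⟨B, hB⟩ := bd (R / 2) (by linarith) (by linarith)
  have hmem : ∀ n, c n ∈ Set.pi univ fun k => Icc (0:ℝ) (B / (R / 2) ^ k) := fun n k _ => by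
    refine ⟨hc n k, ?_⟩
    rw [le_div_iff₀ (by positivity)]
    exact (cz _ (by linarith) (by linarith) n k).trans (hB n)
  obtain ⟨d, hd, φ, hφ, hlimd⟩ := (isCompact_univ_pi fun k => isCompact_Icc).tendsto_subseq hmem
  rw [tendsto_pi_nhds] at hlimd
  refine ⟨d, fun k => (hd k trivial).1, fun z h0 h1 => ?_⟩
  set w := (z + R) / 2 with hw
  have hw0 : 0 < w := by linarith
  have hzw : z < w := by linarith
  obtain ⟨C, hC⟩ := bd w hw0.le (by linarith)
  have bdd : ∀ n k, |c n k * z ^ k| ≤ C * (z / w) ^ k := fun n k => by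
    rw [abs_of_nonneg (mul_nonneg (hc n k) (pow_nonneg h0 k))]
    have : c n k * w ^ k ≤ C := (cz w hw0.le (by linarith) n k).trans (hC n)
    calc c n k * z ^ k = c n k * w ^ k * (z / w) ^ k := by
          rw [mul_assoc, ← mul_pow, mul_div_cancel₀ _ hw0.ne']
      _ ≤ _ := by gcongr
  have sg : Summable fun k : ℕ => C * (z / w) ^ k :=
    (summable_geometric_of_lt_one (by positivity) ((div_lt_one hw0).2 hzw)).mul_left C
  have T := tendsto_tsum_of_dominated_convergence (𝓕 := atTop) (f := fun j k => c (φ j) k * z ^ k)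
    (g := fun k => d k * z ^ k) sg (fun k => (hlimd k).mul_const _)
    (Eventually.of_forall fun n k => bdd (φ n) k)
  have T2 : Tendsto (fun j => ∑' k, c (φ j) k * z ^ k) atTop (𝓝 (g z)) := by
    simp_rw [fun j => (hs (φ j) z h0 h1).tsum_eq]
    exact (hlim z h0 h1).comp hφ.tendsto_atTop
  have sd : Summable fun k => d k * z ^ k := by
    refine sg.of_norm_bounded fun k => ?_
    exact le_of_tendsto ((hlimd k).mul_const (z ^ k)).abs
      (Eventually.of_forall fun n => bdd (φ n) k)
  rw [tendsto_nhds_unique T2 T]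
  exact sd.hasSum

lemma endpoint (hR : 0 < R) (hg : AM R g) (hmono : ∀ z, 0 ≤ z → z < R → g z ≤ g R)
    (hcont : Tendsto g (𝓝[<] R) (𝓝 (g R))) : ∃ c : ℕ → ℝ, (∀ k, 0 ≤ c k) ∧
      ∀ z, 0 ≤ z → z ≤ R → HasSum (fun k => c k * z ^ k) (g z) := by
  obtain ⟨c, hc, hs⟩ := hg
  have hev : ∀ᶠ z in 𝓝[<] R, 0 ≤ z ∧ z < R := by
    have := Ioo_mem_nhdsLT hR
    filter_upwards [this] with z hz using ⟨hz.1.le, hz.2⟩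
  have part : ∀ n, ∑ k ∈ Finset.range n, c k * R ^ k ≤ g R := fun n => by
    have t : Tendsto (fun z : ℝ => ∑ k ∈ Finset.range n, c k * z ^ k) (𝓝[<] R)
        (𝓝 (∑ k ∈ Finset.range n, c k * R ^ k)) := by
      apply Tendsto.mono_left _ nhdsWithin_le_nhds
      apply Continuous.tendsto
      fun_prop
    refine le_of_tendsto t ?_
    filter_upwards [hev] with z hz
    exact (sum_le_hasSum _ (fun k _ => mul_nonneg (hc k) (pow_nonneg hz.1 k))
      (hs z hz.1 hz.2)).trans (hmono z hz.1 hz.2)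
  have nn : ∀ k, 0 ≤ c k * R ^ k := fun k => mul_nonneg (hc k) (by positivity)
  have sm : Summable fun k => c k * R ^ k := summable_of_sum_range_le nn part
  have e1 : ∑' k, c k * R ^ k ≤ g R := sm.tsum_le_of_sum_range_le part
  have e2 : g R ≤ ∑' k, c k * R ^ k := by
    refine le_of_tendsto hcont ?_
    filter_upwards [hev] with z hz
    rw [← (hs z hz.1 hz.2).tsum_eq]
    refine (hs z hz.1 hz.2).summable.tsum_le_tsum (fun k => ?_) sm
    exact mul_le_mul_of_nonneg_left (pow_le_pow_left₀ hz.1 hz.2.le k) (hc k)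
  refine ⟨c, hc, fun z h0 h1 => ?_⟩
  rcases h1.lt_or_eq with h1 | rfl
  · exact hs z h0 h1
  · rw [le_antisymm e2 e1]; exact sm.hasSum

end AM

def QQ (β : ℝ) (μ : Measure ℝ) (m0 : ℝ) (y : ℝ) : ℝ := PP β μ (max 0 (min y m0))

section
variable {μ : Measure ℝ} (h : Levy μ) {β : ℝ} (hβ : 0 ≤ β) {m0 : ℝ} (hm0 : 0 < m0)
include h hβ hm0

omit h hβ hm0 in
lemma QQ_eq {y : ℝ} (h0 : 0 ≤ y) (h1 : y ≤ m0) : QQ β μ m0 y = PP β μ y := by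
  rw [QQ, min_eq_left h1, max_eq_right h0]

omit hm0 in
lemma QQ_mono : Monotone (QQ β μ m0) := fun x y hxy =>
  h.PP_mono hβ (le_max_left _ _) (by gcongr)

lemma QQ_lip : LipschitzWith (PD β μ m0).toNNReal (QQ β μ m0) := by
  have hK := h.PD_nonneg hβ hm0.le
  apply LipschitzWith.of_le_add_mul
  intro x y
  rw [Real.coe_toNNReal _ hK]
  rcases le_total x y with hxy | hxy
  · have := QQ_mono h hβ (m0 := m0) hxy
    have : 0 ≤ PD β μ m0 * dist x y := by positivity
    linarith
  · have h1 : max 0 (min y m0) ≤ max 0 (min x m0) := by gcongr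
    have h2 := h.PP_sub_le hβ (le_max_left _ _) h1
    have h3 : PD β μ (max 0 (min x m0)) ≤ PD β μ m0 :=
      h.PD_mono hβ (le_max_left _ _) (max_le hm0.le (min_le_right _ _))
    have h4 : max 0 (min x m0) - max 0 (min y m0) ≤ x - y := by grind
    rw [Real.dist_eq, abs_of_nonneg (sub_nonneg.2 hxy)]
    unfold QQ
    have : PD β μ (max 0 (min x m0)) * (max 0 (min x m0) - max 0 (min y m0)) ≤ PD β μ m0 * (x - y) :=
      mul_le_mul h3 h4 (by linarith) hK
    linarith

lemma QQ_bd (y : ℝ) : |QQ β μ m0 y| ≤ (PP β μ m0).toNNReal := by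
  rw [Real.coe_toNNReal _ (h.PP_nonneg hβ hm0.le), QQ,
    abs_of_nonneg (h.PP_nonneg hβ (le_max_left _ _))]
  exact h.PP_mono hβ (le_max_left _ _) (max_le hm0.le (min_le_right _ _))

lemma euler_mono {s : ℝ} (hs : 0 ≤ s) (hsK : s * PD β μ m0 ≤ 1) :
    Monotone (euler (QQ β μ m0) s) := by
  intro x y hxy
  have := QQ_mono h hβ (m0 := m0) hxy
  have h2 := (QQ_lip h hβ hm0).dist_le_mul y x
  rw [Real.coe_toNNReal _ (h.PD_nonneg hβ hm0.le), Real.dist_eq, Real.dist_eq,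
    abs_of_nonneg (by linarith), abs_of_nonneg (by linarith)] at h2
  unfold euler
  nlinarith

omit hβ hm0 in
lemma euler_zero (hm0 : 0 ≤ m0) (s : ℝ) : euler (QQ β μ m0) s 0 = 0 := by
  rw [euler, QQ_eq le_rfl hm0, h.PP_zero]; ring

lemma euler_le {s : ℝ} (hs : 0 ≤ s) (y : ℝ) : euler (QQ β μ m0) s y ≤ y := by
  have : 0 ≤ QQ β μ m0 y := h.PP_nonneg hβ (le_max_left _ _)
  unfold euler; nlinarith

lemma euler_iter {s : ℝ} (hs : 0 ≤ s) (hsK : s * PD β μ m0 ≤ 1) (n : ℕ) {y : ℝ} (hy : 0 ≤ y) :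
    0 ≤ (euler (QQ β μ m0) s)^[n] y ∧ (euler (QQ β μ m0) s)^[n] y ≤ y := by
  induction n with
  | zero => exact ⟨hy, le_rfl⟩
  | succ n ih =>
    rw [Function.iterate_succ_apply']
    refine ⟨?_, (euler_le h hβ hm0 hs _).trans ih.2⟩
    have := euler_mono h hβ hm0 hs hsK ih.1
    rwa [euler_zero h hm0.le] at this

lemma euler_AM {s : ℝ} (hs : 0 ≤ s) (hsK : s * PD β μ m0 ≤ 1) (n : ℕ) :
    AM m0 (fun z => (euler (QQ β μ m0) s)^[n] m0 - (euler (QQ β μ m0) s)^[n] (m0 - z)) := by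
  induction n with
  | zero => exact AM.id.congr fun z _ _ => by simp
  | succ n ih =>
    set E := euler (QQ β μ m0) s with hE
    set m := E^[n] m0 with hm
    have hmm := euler_iter h hβ hm0 hs hsK n hm0.le
    rw [← hE, ← hm] at hmm
    set F : ℝ → ℝ := fun z => m - E^[n] (m0 - z) with hF
    have hFr : ∀ z, 0 ≤ z → z < m0 → 0 ≤ F z ∧ F z ≤ m := fun z h0 h1 => by
      have a1 := (euler_iter h hβ hm0 hs hsK n (y := m0 - z) (by linarith)).1
      have a2 := (euler_mono h hβ hm0 hs hsK).iterate n (show m0 - z ≤ m0 by linarith)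
      rw [← hE] at a1 a2
      simp only [hF]
      constructor <;> linarith
    have e : ∀ z, 0 ≤ z → z < m0 → E^[n+1] m0 - E^[n+1] (m0 - z) =
        F z + s * (PP β μ (m - F z) - PP β μ m) := fun z h0 h1 => by
      have := hFr z h0 h1
      rw [Function.iterate_succ_apply', Function.iterate_succ_apply', ← hm]
      have e1 : E^[n] (m0 - z) = m - F z := by simp [hF]
      rw [e1, hE, euler, euler, QQ_eq hmm.1 hmm.2, QQ_eq (by linarith) (by linarith)]
      ring
    rcases hmm.1.eq_or_lt with hz | hpos
    · refine (AM.const le_rfl).congr fun z h0 h1 => ?_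
      have := hFr z h0 h1
      have h3 : F z = 0 := by linarith
      rw [e z h0 h1, h3]; simp
    · have hPD : PD β μ m ≤ PD β μ m0 := h.PD_mono hβ hmm.1 hmm.2
      have hc : 0 ≤ 1 - s * PD β μ m := by nlinarith
      have hG : AM m0 (fun z => PP β μ (m - F z) - PP β μ m + F z * PD β μ m) := by
        refine AM.limit hm0 (F := fun n z => ∑ k ∈ Finset.range n, PA β μ m (k + 2) * F z ^ (k + 2))
          (fun n => AM.finset_sum (fun k => (AM.const (h.PA_nonneg hβ m _)).mul (ih.pow _)) n) ?_
        intro z h0 h1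
        exact (h.hasSum_taylor hpos (hFr z h0 h1).1 (hFr z h0 h1).2).tendsto_sum_nat
      refine (((AM.const hc).mul ih).add ((AM.const hs).mul hG)).congr fun z h0 h1 => ?_
      rw [e z h0 h1]
      simp only [hF]
      ring

lemma exists_flow : ∃ u : ℝ → ℝ → ℝ, (∀ x, u 0 x = x) ∧
    (∀ x, 0 ≤ x → x ≤ m0 → ∀ t, 0 ≤ t → 0 ≤ u t x ∧ u t x ≤ x) ∧
    (∀ x, 0 < x → x ≤ m0 → ∀ t, 0 ≤ t → 0 < u t x) ∧
    (∀ x, Continuous (fun t => u t x)) ∧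
    (∀ x, 0 ≤ x → x ≤ m0 → ∀ t, 0 ≤ t → HasDerivAt (fun t => u t x) (-PP β μ (u t x)) t) ∧
    (∀ t, 0 ≤ t → ∃ c : ℕ → ℝ, (∀ k, 0 ≤ c k) ∧ c 0 = 0 ∧ ∀ z, 0 ≤ z → z ≤ m0 →
      HasSum (fun k => c k * z ^ k) (u t m0 - u t (m0 - z))) := by
  have hL := QQ_lip h hβ hm0
  have hM := QQ_mono h hβ (m0 := m0)
  have hB := QQ_bd h hβ hm0
  have hK := h.PD_nonneg hβ hm0.le
  choose α h0 hα using fun x => ode_global hL hB x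
  have lim : ∀ x t, 0 ≤ t → Tendsto (fun n : ℕ => (euler (QQ β μ m0) (t / n))^[n] x) atTop
      (𝓝 (α x t)) := fun x t ht => by
    have := euler_tendsto hL hM hB (hα x) ht
    rwa [h0] at this
  have hev : ∀ t : ℝ, ∀ᶠ n : ℕ in atTop, t / n * PD β μ m0 ≤ 1 := fun t => by
    have : Tendsto (fun n : ℕ => (t / n : ℝ) * PD β μ m0) atTop (𝓝 0) := by
      simpa using (tendsto_const_div_atTop_nhds_zero_nat t).mul_const (PD β μ m0)
    exact this.eventually (ge_mem_nhds zero_lt_one)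
  have range : ∀ x, 0 ≤ x → x ≤ m0 → ∀ t, 0 ≤ t → 0 ≤ α x t ∧ α x t ≤ x := by
    intro x hx0 hx1 t ht
    constructor
    · refine ge_of_tendsto (lim x t ht) ?_
      filter_upwards [hev t] with n hn
      exact (euler_iter h hβ hm0 (by positivity) hn n hx0).1
    · refine le_of_tendsto (lim x t ht) ?_
      filter_upwards [hev t] with n hn
      exact (euler_iter h hβ hm0 (by positivity) hn n hx0).2
  have mono : ∀ t, 0 ≤ t → Monotone fun x => α x t := by
    intro t ht x y hxy
    refine le_of_tendsto_of_tendsto (lim x t ht) (lim y t ht) ?_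
    filter_upwards [hev t] with n hn
    exact (euler_mono h hβ hm0 (by positivity) hn).iterate n hxy
  have nonexp : ∀ t, 0 ≤ t → ∀ x y, |α x t - α y t| ≤ |x - y| := by
    intro t ht x y
    refine le_of_tendsto ((lim x t ht).sub (lim y t ht)).abs ?_
    filter_upwards [hev t] with n hn
    have : ∀ k : ℕ, |(euler (QQ β μ m0) (t / n))^[k] x - (euler (QQ β μ m0) (t / n))^[k] y|
        ≤ |x - y| := by
      intro k
      induction k with
      | zero => simp
      | succ k ih =>
        rw [Function.iterate_succ_apply', Function.iterate_succ_apply']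
        refine (euler_nonexp hL hM (by positivity) ?_ _ _).trans ih
        rwa [Real.coe_toNNReal _ hK]
    exact this n
  have hcx : ∀ t, 0 ≤ t → Continuous fun x => α x t := fun t ht => by
    have : LipschitzWith 1 (fun x => α x t) := by
      apply LipschitzWith.of_dist_le_mul
      intro x y
      simpa [Real.dist_eq] using nonexp t ht x y
    exact this.continuous
  have z0 : ∀ t, 0 ≤ t → α 0 t = 0 := fun t ht => by
    have := range 0 le_rfl hm0.le t ht
    linarith [this.1, this.2]
  refine ⟨fun t x => α x t, h0, range, ?_, fun x => ?_, ?_, ?_⟩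
  · intro x hx hx1 t ht
    refine lt_of_le_of_ne (range x hx.le hx1 t ht).1 fun he => ?_
    have : α x = fun _ => 0 := by
      refine ODE_solution_unique_univ (v := fun _ y => -QQ β μ m0 y) (s := fun _ => univ)
        (K := (PD β μ m0).toNNReal) (t₀ := t) (fun t => hL.neg.lipschitzOnWith)
        (fun s => ⟨hα x s, trivial⟩) (fun s => ⟨?_, trivial⟩) he.symm
      have : QQ β μ m0 0 = 0 := by rw [QQ_eq le_rfl hm0.le, h.PP_zero]
      simpa [this] using hasDerivAt_const s (0:ℝ)
    have h1 := h0 x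
    rw [this] at h1
    linarith
  · exact continuous_iff_continuousAt.2 fun t => (hα x t).continuousAt
  · intro x hx0 hx1 t ht
    have := range x hx0 hx1 t ht
    have h1 := hα x t
    rwa [QQ_eq this.1 (this.2.trans hx1)] at h1
  · intro t ht
    have am : AM m0 (fun z => α m0 t - α (m0 - z) t) := by
      obtain ⟨N, hN⟩ := eventually_atTop.1 (hev t)
      refine AM.limit hm0 (F := fun n z => (euler (QQ β μ m0) (t / (n + N : ℕ)))^[n + N] m0
        - (euler (QQ β μ m0) (t / (n + N : ℕ)))^[n + N] (m0 - z)) ?_ ?_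
      · intro n
        exact euler_AM h hβ hm0 (by positivity) (hN _ (by omega)) _
      · intro z _ _
        have := (lim m0 t ht).sub (lim (m0 - z) t ht)
        exact (tendsto_add_atTop_iff_nat N).2 this
    have am1 : ∀ z, 0 ≤ z → z < m0 → α m0 t - α (m0 - z) t ≤ α m0 t - α (m0 - m0) t := by
      intro z hz0 hz1
      have := mono t ht (show m0 - m0 ≤ m0 - z by linarith)
      simp only at this ⊢
      linarith
    have am2 : Tendsto (fun z => α m0 t - α (m0 - z) t) (𝓝[<] m0) (𝓝 (α m0 t - α (m0 - m0) t)) := by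
      apply Tendsto.mono_left _ nhdsWithin_le_nhds
      exact Continuous.tendsto (continuous_const.sub ((hcx t ht).comp (by fun_prop))) m0
    obtain ⟨c, hc, hs⟩ := am.endpoint hm0 am1 am2
    refine ⟨c, hc, ?_, hs⟩
    have h1 := hs 0 le_rfl hm0.le
    have h2 : HasSum (fun k => c k * (0:ℝ) ^ k) (c 0) := by
      refine hasSum_cg (hasSum_ite_eq (0:ℕ) (c 0)) (fun k => ?_) rfl
      split_ifs with hk <;> simp [hk]
    have := h1.unique h2
    simpa using this.symm

end

def BM (M : ℝ) (f : ℝ → ℝ) : Prop :=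
  Measurable ((Ioi (0:ℝ)).indicator f) ∧ ∀ x, 0 < x → |f x| ≤ M

lemma BM.of_cont {f : ℝ → ℝ} {M : ℝ} (hf : ContinuousOn f (Ioi 0)) (hM : ∀ x ∈ Ioi (0:ℝ), |f x| ≤ M) :
    BM M f := by
  refine ⟨?_, hM⟩
  have h : Measurable (fun x : Ioi (0:ℝ) => f x) := (continuousOn_iff_continuous_restrict.1 hf).measurable
  refine measurable_of_restrict_of_restrict_compl (s := Ioi (0:ℝ)) measurableSet_Ioi ?_ ?_
  · convert h using 1
    ext x
    simp [Set.indicator_of_mem x.2]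
  · convert (measurable_const : Measurable (fun x : ((Ioi (0:ℝ))ᶜ : Set ℝ) => (0:ℝ))) using 1
    ext x
    simp [Set.indicator_of_notMem x.2]

lemma BM.exp (j : ℕ) : BM 1 (fun x => Real.exp (-((j:ℝ) * x))) := by
  refine BM.of_cont (by fun_prop) fun x hx => ?_
  rw [abs_of_pos (Real.exp_pos _), Real.exp_le_one_iff]
  have : 0 ≤ (j:ℝ) * x := mul_nonneg (by positivity) (le_of_lt hx)
  linarith

lemma BM.nonneg {M : ℝ} {f : ℝ → ℝ} (h : BM M f) : 0 ≤ M := (abs_nonneg _).trans (h.2 1 one_pos)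

lemma BM.lin {M N : ℝ} {f g : ℝ → ℝ} (hf : BM M f) (hg : BM N g) (a b : ℝ) :
    BM (|a| * M + |b| * N) (fun x => a * f x + b * g x) := by
  constructor
  · have : (Ioi (0:ℝ)).indicator (fun x => a * f x + b * g x)
        = fun x => a * (Ioi (0:ℝ)).indicator f x + b * (Ioi (0:ℝ)).indicator g x := by
      ext x
      by_cases hx : x ∈ Ioi (0:ℝ) <;> simp [hx]
    rw [this]
    exact (hf.1.const_mul a).add (hg.1.const_mul b)
  · intro x hx
    refine (abs_add_le _ _).trans ?_
    rw [abs_mul, abs_mul]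
    have h1 := hf.2 x hx
    have h2 := hg.2 x hx
    gcongr

lemma pi_pos (ν : Measure ℝ) [IsFiniteMeasure ν] (k : ℕ) :
    ∀ᵐ x ∂(Measure.pi fun _ : Fin k => ν.restrict (Ioi 0)), ∀ i, 0 < x i := by
  rw [ae_all_iff]
  intro i
  have h : ∀ᵐ y ∂(ν.restrict (Ioi 0)), (0:ℝ) < y := ae_restrict_mem measurableSet_Ioi
  exact (Measure.quasiMeasurePreserving_eval (μ := fun _ : Fin k => ν.restrict (Ioi 0)) i).ae h

lemma sum_pos_fin {k : ℕ} {x : Fin (k+1) → ℝ} (hx : ∀ i, 0 < x i) : 0 < ∑ i, x i :=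
  Finset.sum_pos (fun i _ => hx i) Finset.univ_nonempty

section
variable (ν : Measure ℝ) [IsFiniteMeasure ν] {f : ℝ → ℝ} {M : ℝ}

lemma int_sum (hf : BM M f) (k : ℕ) : Integrable (fun x : Fin (k+1) → ℝ => f (∑ i, x i))
    (Measure.pi fun _ : Fin (k+1) => ν.restrict (Ioi 0)) := by
  have h1 : Measurable (fun x : Fin (k+1) → ℝ => (Ioi (0:ℝ)).indicator f (∑ i, x i)) :=
    hf.1.comp (by fun_prop)
  refine (Integrable.of_bound h1.aestronglyMeasurable M ?_).congr ?_
  · filter_upwards [pi_pos ν (k+1)] with x hx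
    have := sum_pos_fin hx
    rw [indicator_of_mem (show _ ∈ Ioi (0:ℝ) from this)]
    exact hf.2 _ this
  · filter_upwards [pi_pos ν (k+1)] with x hx
    have := sum_pos_fin hx
    rw [indicator_of_mem (show _ ∈ Ioi (0:ℝ) from this)]

lemma int_one (hf : BM M f) : Integrable f (ν.restrict (Ioi 0)) := by
  refine (Integrable.of_bound hf.1.aestronglyMeasurable M ?_).congr ?_
  · filter_upwards [ae_restrict_mem measurableSet_Ioi] with x hx
    rw [indicator_of_mem hx]
    exact hf.2 _ hx
  · filter_upwards [ae_restrict_mem measurableSet_Ioi] with x hx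
    rw [indicator_of_mem hx]

lemma int_coord (hf : BM M f) (k : ℕ) (i : Fin k) : Integrable (fun x : Fin k → ℝ => f (x i))
    (Measure.pi fun _ : Fin k => ν.restrict (Ioi 0)) := by
  have h1 : Measurable (fun x : Fin k → ℝ => (Ioi (0:ℝ)).indicator f (x i)) :=
    hf.1.comp (by fun_prop)
  refine (Integrable.of_bound h1.aestronglyMeasurable M ?_).congr ?_
  · filter_upwards [pi_pos ν k] with x hx
    rw [indicator_of_mem (show _ ∈ Ioi (0:ℝ) from hx i)]
    exact hf.2 _ (hx i)
  · filter_upwards [pi_pos ν k] with x hx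
    rw [indicator_of_mem (show _ ∈ Ioi (0:ℝ) from hx i)]

lemma int_Ik (hf : BM M f) (k : ℕ) : Integrable (fun x : Fin (k+1) → ℝ => f (∑ i, x i) - ∑ i, f (x i))
    (Measure.pi fun _ : Fin (k+1) => ν.restrict (Ioi 0)) :=
  (int_sum ν hf k).sub (integrable_finset_sum _ fun i _ => int_coord ν hf (k+1) i)

lemma mass_pi (k : ℕ) : (Measure.pi fun _ : Fin k => ν.restrict (Ioi 0)).real univ
    = ((ν (Ioi 0)).toReal) ^ k := by
  simp [Measure.real, Measure.pi_univ]

lemma Ik_le (hf : BM M f) (hm : 0 < (ν (Ioi 0)).toReal) (k : ℕ) : |Ik (k+1) ν f| ≤ (k + 2) * M := by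
  have h := norm_integral_le_of_norm_le_const (μ := Measure.pi fun _ : Fin (k+1) => ν.restrict (Ioi 0))
    (f := fun x => f (∑ i, x i) - ∑ i, f (x i)) (C := (k+2) * M) (by
      filter_upwards [pi_pos ν (k+1)] with x hx
      have h1 := hf.2 _ (sum_pos_fin hx)
      have h2 : |∑ i, f (x i)| ≤ (k+1) * M := by
        refine (Finset.abs_sum_le_sum_abs _ _).trans ?_
        refine (Finset.sum_le_sum fun i _ => hf.2 _ (hx i)).trans ?_
        simp
      rw [Real.norm_eq_abs]
      refine (abs_sub _ _).trans ?_
      linarith)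
  rw [mass_pi] at h
  unfold Ik
  rw [abs_div, abs_of_pos (pow_pos hm _), div_le_iff₀ (pow_pos hm _)]
  exact h

lemma Ik_lin {g : ℝ → ℝ} {N : ℝ} (hf : BM M f) (hg : BM N g) (a b : ℝ) (k : ℕ) :
    Ik (k+1) ν (fun x => a * f x + b * g x) = a * Ik (k+1) ν f + b * Ik (k+1) ν g := by
  unfold Ik
  rw [← mul_div_assoc, ← mul_div_assoc, ← add_div, ← integral_const_mul, ← integral_const_mul,
    ← integral_add ((int_Ik ν hf k).const_mul a) ((int_Ik ν hg k).const_mul b)]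
  congr 2
  ext x
  rw [Finset.sum_add_distrib, ← Finset.mul_sum, ← Finset.mul_sum]
  ring

lemma int_exp_sum (j k : ℕ) : ∫ x : Fin k → ℝ, Real.exp (-((j:ℝ) * ∑ i, x i))
    ∂(Measure.pi fun _ : Fin k => ν.restrict (Ioi 0))
    = (∫ x in Ioi (0:ℝ), Real.exp (-((j:ℝ) * x)) ∂ν) ^ k := by
  have := integral_fintype_prod_eq_pow (ι := Fin k) (μ := ν.restrict (Ioi 0))
    (fun x : ℝ => Real.exp (-((j:ℝ) * x)))
  rw [Fintype.card_fin] at this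
  rw [← this]
  congr 1
  ext x
  rw [← Real.exp_sum, Finset.sum_neg_distrib, Finset.mul_sum]

lemma int_coord_eq (f : ℝ → ℝ) (k : ℕ) (i : Fin (k+1)) : ∫ x : Fin (k+1) → ℝ, f (x i)
    ∂(Measure.pi fun _ : Fin (k+1) => ν.restrict (Ioi 0))
    = (∫ x in Ioi (0:ℝ), f x ∂ν) * ((ν (Ioi 0)).toReal) ^ k := by
  have := integral_fintype_prod_eq_prod (ι := Fin (k+1)) (μ := fun _ => ν.restrict (Ioi 0))
    (fun l (x : ℝ) => if l = i then f x else 1)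
  rw [← Finset.mul_prod_erase _ _ (Finset.mem_univ i)] at this
  rw [Finset.prod_congr rfl (g := fun _ => ((ν (Ioi 0)).toReal))] at this
  · simp only [if_true, Finset.prod_const, Finset.card_erase_of_mem (Finset.mem_univ i), Finset.card_univ,
      Fintype.card_fin, Nat.add_sub_cancel] at this
    rw [← this]
    congr 1
    ext x
    simp
  · intro l hl
    simp [(Finset.mem_erase.1 hl).1, Measure.real]

lemma Ik_exp (j k : ℕ) (hm : 0 < (ν (Ioi 0)).toReal) :
    Ik (k+1) ν (fun x => Real.exp (-((j:ℝ) * x))) * (ν (Ioi 0)).toReal ^ (k+1) =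
    (∫ x in Ioi (0:ℝ), Real.exp (-((j:ℝ) * x)) ∂ν) ^ (k+1) -
     (k+1) * ((∫ x in Ioi (0:ℝ), Real.exp (-((j:ℝ) * x)) ∂ν) * (ν (Ioi 0)).toReal ^ k) := by
  unfold Ik
  rw [div_mul_cancel₀ _ (pow_pos hm _).ne', integral_sub (int_sum ν (BM.exp j) k)
    (integrable_finset_sum _ fun i _ => int_coord ν (BM.exp j) (k+1) i), int_exp_sum,
    integral_finset_sum _ (fun i _ => int_coord ν (BM.exp j) (k+1) i)]
  simp_rw [int_coord_eq ν (fun x => Real.exp (-((j:ℝ) * x))) k]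
  simp

end

section
variable {μ : Measure ℝ} (h : Levy μ) {β : ℝ} (hβ : 0 ≤ β) (Ψ : ℝ → ℝ)
  (hΨ : ∀ u, 0 < u → Ψ u = PP β μ u)
  (ν : Measure ℝ) [IsFiniteMeasure ν] (hm : 0 < (ν (Ioi 0)).toReal) {f g : ℝ → ℝ} {M N : ℝ}
include h hΨ hm

lemma coef_eq (k : ℕ) : ((-((ν (Ioi 0)).toReal)) ^ (k + 2) * iteratedDeriv (k + 2) Ψ ((ν (Ioi 0)).toReal) /
        ((k + 2).factorial : ℝ)) = PA β μ (ν (Ioi 0)).toReal (k+2) * (ν (Ioi 0)).toReal ^ (k+2) := by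
  rw [h.iteratedDeriv_PP Ψ hΨ k _ hm]
  have : ((k+2).factorial : ℝ) ≠ 0 := by positivity
  have e : ((-1:ℝ)) ^ (k+2) * (-1) ^ (k+2) = 1 := by rw [← mul_pow]; simp
  rw [neg_pow, div_eq_iff this]
  linear_combination (PA β μ (ν (Ioi 0)).toReal (k+2) * (ν (Ioi 0)).toReal ^ (k+2) * ((k+2).factorial:ℝ)) * e

include hβ
lemma term_le (hf : BM M f) (k : ℕ) : |PA β μ (ν (Ioi 0)).toReal (k+2) * (ν (Ioi 0)).toReal ^ (k+2) * Ik (k+2) ν f|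
    ≤ 2 * M * (((k+2:ℕ):ℝ) * (PA β μ (ν (Ioi 0)).toReal (k+2) * (ν (Ioi 0)).toReal ^ (k+2))) := by
  have h1 := Ik_le ν hf hm (k+1)
  have h2 := h.PA_nonneg hβ (ν (Ioi 0)).toReal (k+2)
  have h3 : 0 ≤ PA β μ (ν (Ioi 0)).toReal (k+2) * (ν (Ioi 0)).toReal ^ (k+2) := by positivity
  rw [abs_mul, abs_of_nonneg h3]
  have h4 : |Ik (k+2) ν f| ≤ 2 * M * ((k+2:ℕ):ℝ) := by
    refine h1.trans ?_
    push_cast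
    have := hf.nonneg
    nlinarith [mul_nonneg this (Nat.cast_nonneg k : (0:ℝ) ≤ k)]
  calc _ ≤ _ := mul_le_mul_of_nonneg_left h4 h3
    _ = _ := by ring

lemma summable_term (hf : BM M f) : Summable fun k => PA β μ (ν (Ioi 0)).toReal (k+2) * (ν (Ioi 0)).toReal ^ (k+2) * Ik (k+2) ν f :=
  Summable.of_norm_bounded ((h.hasSum_taylor' (β := β) hm).summable.mul_left (2*M)) (term_le h hβ Ψ hΨ ν hm hf)

lemma Lform_le (hf : BM M f) : |Lform Ψ ν f| ≤ 2 * M * ((ν (Ioi 0)).toReal * PD β μ (ν (Ioi 0)).toReal) := by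
  unfold Lform
  simp_rw [coef_eq h Ψ hΨ ν hm]
  rw [← Real.norm_eq_abs]
  exact tsum_of_norm_bounded ((h.hasSum_taylor' (β := β) hm).mul_left (2*M)) (term_le h hβ Ψ hΨ ν hm hf)

lemma Lform_lin (hf : BM M f) (hg : BM N g) (a b : ℝ) :
    Lform Ψ ν (fun x => a * f x + b * g x) = a * Lform Ψ ν f + b * Lform Ψ ν g := by
  unfold Lform
  simp_rw [coef_eq h Ψ hΨ ν hm]
  rw [← tsum_mul_left, ← tsum_mul_left,
    ← ((summable_term h hβ Ψ hΨ ν hm hf).mul_left a).tsum_add ((summable_term h hβ Ψ hΨ ν hm hg).mul_left b)]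
  congr 1
  ext k
  rw [Ik_lin ν hf hg a b (k+1)]
  ring

lemma Lform_exp (j : ℕ) : Lform Ψ ν (fun x => Real.exp (-((j:ℝ) * x))) =
    PP β μ ((ν (Ioi 0)).toReal - ∫ x in Ioi (0:ℝ), Real.exp (-((j:ℝ) * x)) ∂ν)
      - PP β μ (ν (Ioi 0)).toReal := by
  unfold Lform
  simp_rw [coef_eq h Ψ hΨ ν hm]
  set m := (ν (Ioi 0)).toReal with hmd
  set l := ∫ x in Ioi (0:ℝ), Real.exp (-((j:ℝ) * x)) ∂ν with hl
  have l0 : 0 ≤ l := integral_nonneg fun x => (Real.exp_pos _).le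
  have lm : l ≤ m := by
    have : m = ∫ x in Ioi (0:ℝ), (1:ℝ) ∂ν := by simp [hmd, Measure.real]
    rw [this]
    refine integral_mono_ae (int_one ν (BM.exp j)) (integrable_const _) ?_
    filter_upwards [ae_restrict_mem measurableSet_Ioi] with x hx
    exact (le_abs_self _).trans ((BM.exp j).2 x hx)
  have s1 := h.hasSum_taylor (β := β) hm l0 lm
  have s2 := (h.hasSum_taylor' (β := β) hm).mul_left (l / m)
  refine (hasSum_cg (s1.sub s2) ?_ ?_).tsum_eq
  · intro k
    have := Ik_exp ν j (k+1) hm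
    rw [mul_assoc, mul_comm (m ^ _), this, ← hl, ← hmd]
    push_cast
    field_simp
    ring
  · field_simp
    ring

end

/-- exponential polynomials -/
def GG (s : Finset ℕ) (a : ℕ → ℝ) (x : ℝ) : ℝ := ∑ j ∈ s, a j * Real.exp (-((j:ℝ) * x))

lemma BM.GG (s : Finset ℕ) (a : ℕ → ℝ) : BM (∑ j ∈ s, |a j|) (GG s a) := by
  refine BM.of_cont (by unfold _root_.GG; fun_prop) fun x hx => ?_
  refine (Finset.abs_sum_le_sum_abs _ _).trans (Finset.sum_le_sum fun j _ => ?_)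
  rw [abs_mul]
  have := (BM.exp j).2 x hx
  nlinarith [abs_nonneg (a j)]

lemma int_GG (ν : Measure ℝ) [IsFiniteMeasure ν] (s : Finset ℕ) (a : ℕ → ℝ) :
    ∫ x in Ioi (0:ℝ), GG s a x ∂ν = ∑ j ∈ s, a j * ∫ x in Ioi (0:ℝ), Real.exp (-((j:ℝ) * x)) ∂ν := by
  unfold GG
  rw [integral_finset_sum _ fun j _ => (int_one ν (BM.exp j)).const_mul _]
  simp_rw [integral_const_mul]

lemma Lform_GG {μ : Measure ℝ} (h : Levy μ) {β : ℝ} (hβ : 0 ≤ β) (Ψ : ℝ → ℝ)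
    (hΨ : ∀ u, 0 < u → Ψ u = PP β μ u)
    (ν : Measure ℝ) [IsFiniteMeasure ν] (hm : 0 < (ν (Ioi 0)).toReal) (s : Finset ℕ) (a : ℕ → ℝ) :
    Lform Ψ ν (GG s a) = ∑ j ∈ s, a j * (PP β μ ((ν (Ioi 0)).toReal - ∫ x in Ioi (0:ℝ), Real.exp (-((j:ℝ) * x)) ∂ν)
      - PP β μ (ν (Ioi 0)).toReal) := by
  induction s using Finset.induction_on with
  | empty =>
    have h0 := Lform_lin h hβ Ψ hΨ ν hm (BM.exp 0) (BM.exp 0) 0 0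
    simp only [zero_mul, add_zero] at h0
    have : GG ∅ a = fun _ => 0 := by ext x; simp [GG]
    rw [this, h0]; simp
  | insert j s hj ih =>
    rw [Finset.sum_insert hj, ← ih, ← Lform_exp h hβ Ψ hΨ ν hm j]
    have := Lform_lin h hβ Ψ hΨ ν hm (BM.exp j) (BM.GG s a) (a j) 1
    rw [one_mul] at this
    rw [← this]
    congr 1
    ext x
    simp [GG, Finset.sum_insert hj]

lemma approx {f : ℝ → ℝ} (hf : IsTestFun f) {ε : ℝ} (hε : 0 < ε) :
    ∃ (s : Finset ℕ) (a : ℕ → ℝ), ∀ x, 0 < x → |f x - GG s a x| ≤ ε := by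
  obtain ⟨hc, -, ⟨l0, h0⟩, ⟨l1, h1⟩⟩ := hf
  have c1 : ContinuousOn (fun y => f (-Real.log y)) (Ioo 0 1) := by
    refine hc.comp (Real.continuousOn_log.mono ?_).neg ?_
    · intro y hy; exact hy.1.ne'
    · intro y hy
      have := Real.log_neg hy.1 hy.2
      simpa using this
  have ta : Tendsto (fun y => f (-Real.log y)) (𝓝[>] 0) (𝓝 l1) :=
    h1.comp (tendsto_neg_atBot_atTop.comp Real.tendsto_log_nhdsGT_zero)
  have tb : Tendsto (fun y => f (-Real.log y)) (𝓝[<] 1) (𝓝 l0) := by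
    refine h0.comp (tendsto_nhdsWithin_iff.2 ⟨?_, ?_⟩)
    · have : Tendsto (fun y => -Real.log y) (𝓝 1) (𝓝 (-Real.log 1)) :=
        (Real.continuousAt_log one_ne_zero).neg
      rw [Real.log_one, neg_zero] at this
      exact this.mono_left nhdsWithin_le_nhds
    · filter_upwards [Ioo_mem_nhdsLT (zero_lt_one (α := ℝ))] with y hy
      have := Real.log_neg hy.1 hy.2
      simpa using this
  have cE := continuousOn_Icc_extendFrom_Ioo c1 ta tb
  obtain ⟨p, hp⟩ := exists_polynomial_near_of_continuousOn 0 1 _ cE ε hε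
  refine ⟨Finset.range (p.natDegree + 1), p.coeff, fun x hx => ?_⟩
  have hy : Real.exp (-x) ∈ Ioo (0:ℝ) 1 := ⟨Real.exp_pos _, by rw [Real.exp_lt_one_iff]; linarith⟩
  have h2 := hp _ (Ioo_subset_Icc_self hy)
  rw [extendFrom_eq (by rw [closure_Ioo zero_ne_one]; exact Ioo_subset_Icc_self hy) (y := f x)] at h2
  · rw [abs_sub_comm]
    have e : GG (Finset.range (p.natDegree + 1)) p.coeff x = p.eval (Real.exp (-x)) := by
      rw [Polynomial.eval_eq_sum_range]
      unfold GG
      refine Finset.sum_congr rfl fun j _ => ?_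
      rw [← Real.exp_nat_mul]
      congr 2; ring
    rw [e]
    exact h2.le
  · have := c1 _ hy
    unfold ContinuousWithinAt at this
    simpa using this

/-- law of the sum of `k` points -/
def CV (ν : Measure ℝ) (k : ℕ) : Measure ℝ :=
  (Measure.pi fun _ : Fin k => ν.restrict (Ioi 0)).map (fun x => ∑ i, x i)

def NU (c : ℕ → ℝ) (ν : Measure ℝ) : Measure ℝ :=
  Measure.sum fun k => ENNReal.ofReal (c k) • CV ν k

section
variable (ν : Measure ℝ) [IsFiniteMeasure ν]

lemma CV_null (k : ℕ) : CV ν (k+1) (Iic 0) = 0 := by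
  unfold CV
  rw [Measure.map_apply (by fun_prop) measurableSet_Iic]
  rw [← nonpos_iff_eq_zero]
  refine (measure_mono ?_).trans_eq (ae_iff.1 (pi_pos ν (k+1)))
  intro x hx hx2
  exact absurd (sum_pos_fin hx2) (not_lt.2 hx)

variable {c : ℕ → ℝ} (hc : ∀ k, 0 ≤ c k) (hc0 : c 0 = 0)

include hc0 in
lemma NU_null : NU c ν (Iic 0) = 0 := by
  unfold NU
  rw [Measure.sum_apply _ measurableSet_Iic]
  rw [ENNReal.tsum_eq_zero]
  intro k
  cases k with
  | zero => simp [hc0]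
  | succ k => simp [CV_null]

lemma CV_univ (k : ℕ) : CV ν k univ = ENNReal.ofReal ((ν (Ioi 0)).toReal ^ k) := by
  unfold CV
  rw [Measure.map_apply (by fun_prop) MeasurableSet.univ, preimage_univ, ← mass_pi ν k, Measure.real,
    ENNReal.ofReal_toReal (measure_ne_top _ _)]

include hc in
lemma NU_univ {S : ℝ} (hS : HasSum (fun k => c k * (ν (Ioi 0)).toReal ^ k) S) :
    NU c ν univ = ENNReal.ofReal S := by
  unfold NU
  rw [Measure.sum_apply _ MeasurableSet.univ, ← hS.tsum_eq,
    ENNReal.ofReal_tsum_of_nonneg (fun k => mul_nonneg (hc k) (by positivity)) hS.summable]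
  congr 1
  ext k
  rw [Measure.smul_apply, CV_univ, smul_eq_mul, ENNReal.ofReal_mul (hc k)]

lemma restrict_self {ν : Measure ℝ} (h : ν (Iic 0) = 0) : ν.restrict (Ioi 0) = ν := by
  refine Measure.restrict_eq_self_of_ae_mem ?_
  rw [ae_iff]
  convert h using 2
  ext x; simp

include hc hc0 in
lemma NU_int [IsFiniteMeasure (NU c ν)] {f : ℝ → ℝ} {M : ℝ} (hf : BM M f) :
    HasSum (fun k => c k * ∫ x : Fin k → ℝ, f (∑ i, x i) ∂(Measure.pi fun _ : Fin k => ν.restrict (Ioi 0)))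
      (∫ x in Ioi (0:ℝ), f x ∂(NU c ν)) := by
  have hi := int_one (NU c ν) hf
  rw [restrict_self (NU_null ν hc0)] at hi ⊢
  refine hasSum_cg (hasSum_integral_measure hi) ?_ rfl
  intro k
  rw [integral_smul_measure, ENNReal.toReal_ofReal (hc k), smul_eq_mul]
  cases k with
  | zero => simp [hc0]
  | succ k =>
    congr 1
    unfold CV
    rw [integral_map (by fun_prop)]
    refine ⟨_, hf.1.stronglyMeasurable, ?_⟩
    have : ∀ᵐ x ∂(CV ν (k+1)), x ∈ Ioi (0:ℝ) := by
      rw [ae_iff]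
      convert CV_null ν k using 2
      ext x; simp
    filter_upwards [this] with x hx
    rw [indicator_of_mem hx]

include hc hc0 in
lemma NU_exp [IsFiniteMeasure (NU c ν)] (j : ℕ) {S : ℝ}
    (hS : HasSum (fun k => c k * (∫ x in Ioi (0:ℝ), Real.exp (-((j:ℝ) * x)) ∂ν) ^ k) S) :
    ∫ x in Ioi (0:ℝ), Real.exp (-((j:ℝ) * x)) ∂(NU c ν) = S := by
  have := NU_int ν hc hc0 (BM.exp j)
  simp_rw [int_exp_sum ν j] at this
  exact this.unique hS

include hc hc0 in
/-- closeness to the initial datum -/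
lemma NU_close [IsFiniteMeasure (NU c ν)] {S : ℝ} (hS : HasSum (fun k => c k * (ν (Ioi 0)).toReal ^ k) S)
    {f : ℝ → ℝ} {M : ℝ} (hf : BM M f) :
    |∫ x in Ioi (0:ℝ), f x ∂(NU c ν) - c 1 * ∫ x in Ioi (0:ℝ), f x ∂ν|
      ≤ M * (S - c 1 * (ν (Ioi 0)).toReal) := by
  have h1 := (hasSum_nat_add_iff' 2).2 (NU_int ν hc hc0 hf)
  have h2 := ((hasSum_nat_add_iff' 2).2 hS).mul_left M
  simp only [Finset.sum_range_succ, Finset.sum_range_zero, hc0, zero_mul, zero_add, pow_one] at h1 h2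
  have e := int_coord_eq ν f 0 0
  have e2 : ∫ x : Fin 1 → ℝ, f (∑ i, x i) ∂(Measure.pi fun _ : Fin 1 => ν.restrict (Ioi 0))
     = ∫ x in Ioi (0:ℝ), f x ∂ν := by
    rw [pow_zero, mul_one] at e
    rw [← e]; simp
  rw [e2] at h1
  rw [← h1.tsum_eq, ← Real.norm_eq_abs]
  refine tsum_of_norm_bounded h2 fun k => ?_
  have h3 := norm_integral_le_of_norm_le_const (μ := Measure.pi fun _ : Fin (k+2) => ν.restrict (Ioi 0))
    (f := fun x => f (∑ i, x i)) (C := M) (by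
      filter_upwards [pi_pos ν (k+2)] with x hx
      exact hf.2 _ (sum_pos_fin (k := k+1) hx))
  rw [mass_pi] at h3
  rw [norm_mul, Real.norm_eq_abs, abs_of_nonneg (hc _)]
  calc _ ≤ _ := mul_le_mul_of_nonneg_left h3 (hc (k+2))
    _ = _ := by ring
end

lemma IsTestFun.comp_exp {g : ℝ → ℝ} (hg : Continuous g) : IsTestFun (fun x => g (Real.exp (-x))) := by
  refine ⟨by fun_prop, ?_, ⟨g (Real.exp (-0)), ?_⟩, ⟨g 0, ?_⟩⟩
  · obtain ⟨M, hM⟩ := isCompact_Icc.exists_bound_of_continuousOn (s := Icc (0:ℝ) 1) hg.continuousOn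
    refine ⟨M, fun x hx => hM _ ⟨(Real.exp_pos _).le, ?_⟩⟩
    rw [Real.exp_le_one_iff]; simp at hx; linarith
  · have : Continuous (fun x => g (Real.exp (-x))) := by fun_prop
    exact (this.tendsto 0).mono_left nhdsWithin_le_nhds
  · exact (hg.tendsto 0).comp (Real.tendsto_exp_atBot.comp tendsto_neg_atTop_atBot)

lemma IsTestFun.exp (j : ℕ) : IsTestFun (fun x => Real.exp (-((j:ℝ) * x))) := by
  have := IsTestFun.comp_exp (g := fun y => y ^ j) (by fun_prop)
  convert this using 2 with x
  rw [← Real.exp_nat_mul]; congr 1; ring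

lemma IsTestFun.bm {f : ℝ → ℝ} (hf : IsTestFun f) : ∃ M, BM M f := by
  obtain ⟨M, hM⟩ := hf.2.1
  exact ⟨M, BM.of_cont hf.1 hM⟩

lemma int_close (ν : Measure ℝ) [IsFiniteMeasure ν] {f g : ℝ → ℝ} {M N : ℝ} (hf : BM M f) (hg : BM N g) {ε : ℝ}
    (h : ∀ x, 0 < x → |f x - g x| ≤ ε) :
    |∫ x in Ioi (0:ℝ), f x ∂ν - ∫ x in Ioi (0:ℝ), g x ∂ν| ≤ ε * (ν (Ioi 0)).toReal := by
  rw [← integral_sub (int_one ν hf) (int_one ν hg)]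
  have := norm_integral_le_of_norm_le_const (μ := ν.restrict (Ioi 0)) (f := fun x => f x - g x) (C := ε) (by
    filter_upwards [ae_restrict_mem measurableSet_Ioi] with x hx using h x hx)
  simpa [Measure.real] using this

lemma measure_unique (ν ν' : Measure ℝ) [IsFiniteMeasure ν] [IsFiniteMeasure ν']
    (h0 : ν (Iic 0) = 0) (h0' : ν' (Iic 0) = 0)
    (h : ∀ j : ℕ, ∫ x in Ioi (0:ℝ), Real.exp (-((j:ℝ) * x)) ∂ν = ∫ x in Ioi (0:ℝ), Real.exp (-((j:ℝ) * x)) ∂ν') :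
    ν = ν' := by
  have key : ∀ f, IsTestFun f → ∫ x in Ioi (0:ℝ), f x ∂ν = ∫ x in Ioi (0:ℝ), f x ∂ν' := by
    intro f hf
    obtain ⟨M, hM⟩ := hf.bm
    refine eq_of_abs_sub_le_all fun ε hε => ?_
    set C := (ν (Ioi 0)).toReal + (ν' (Ioi 0)).toReal + 1 with hC
    have p1 : 0 ≤ (ν (Ioi 0)).toReal := ENNReal.toReal_nonneg
    have p2 : 0 ≤ (ν' (Ioi 0)).toReal := ENNReal.toReal_nonneg
    have hC0 : 0 < C := by linarith
    obtain ⟨s, a, hsa⟩ := approx hf (div_pos hε hC0)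
    have e1 := int_close ν hM (BM.GG s a) hsa
    have e2 := int_close ν' hM (BM.GG s a) hsa
    have e3 : ∫ x in Ioi (0:ℝ), GG s a x ∂ν = ∫ x in Ioi (0:ℝ), GG s a x ∂ν' := by
      rw [int_GG, int_GG]; simp_rw [h]
    rw [e3] at e1
    have e4 : ε / C * C = ε := div_mul_cancel₀ _ hC0.ne'
    have e5 : 0 ≤ ε / C := by positivity
    rw [abs_le] at *
    constructor <;> nlinarith
  rw [restrict_self h0, restrict_self h0'] at key
  have em : MeasurableEmbedding (fun x : ℝ => Real.exp (-x)) :=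
    (Measurable.measurableEmbedding (by fun_prop) (fun x y hxy => by
      have := Real.exp_injective hxy; linarith))
  have hmap : ν.map (fun x : ℝ => Real.exp (-x)) = ν'.map (fun x : ℝ => Real.exp (-x)) := by
    refine ext_of_forall_integral_eq_of_IsFiniteMeasure fun g => ?_
    rw [em.integral_map, em.integral_map]
    exact key _ (IsTestFun.comp_exp g.continuous)
  have := congrArg (Measure.comap (fun x : ℝ => Real.exp (-x))) hmap
  rwa [em.comap_map, em.comap_map] at this

lemma mass_zero (ν : Measure ℝ) [IsFiniteMeasure ν] :
    ∫ x in Ioi (0:ℝ), Real.exp (-(((0:ℕ):ℝ) * x)) ∂ν = (ν (Ioi 0)).toReal := by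
  simp [Measure.real]

lemma lam_nonneg (ν : Measure ℝ) (j : ℕ) : 0 ≤ ∫ x in Ioi (0:ℝ), Real.exp (-((j:ℝ) * x)) ∂ν :=
  integral_nonneg fun x => (Real.exp_pos _).le

lemma lam_le (ν : Measure ℝ) [IsFiniteMeasure ν] (j : ℕ) :
    ∫ x in Ioi (0:ℝ), Real.exp (-((j:ℝ) * x)) ∂ν ≤ (ν (Ioi 0)).toReal := by
  rw [← mass_zero ν]
  refine integral_mono_ae (int_one ν (BM.exp j)) (int_one ν (BM.exp 0)) ?_
  filter_upwards [ae_restrict_mem measurableSet_Ioi] with x hx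
  refine (le_abs_self _).trans (((BM.exp j).2 x hx).trans ?_)
  simp

lemma c1_bound {c : ℕ → ℝ} (hc : ∀ k, 0 ≤ c k) (hc0 : c 0 = 0) {m S F : ℝ} (hm : 0 < m)
    (h1 : HasSum (fun k => c k * m ^ k) S) (h2 : HasSum (fun k => c k * (m / 2) ^ k) F) :
    4 * F - S ≤ c 1 * m ∧ c 1 * m ≤ S := by
  constructor
  · have a1 := ((hasSum_nat_add_iff' 2).2 h1)
    have a2 := ((hasSum_nat_add_iff' 2).2 h2).mul_left 4
    simp only [Finset.sum_range_succ, Finset.sum_range_zero, hc0, zero_mul, zero_add, pow_one] at a1 a2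
    have := hasSum_le (fun k => by
      have hk := hc (k+2)
      have : (1/2:ℝ) ^ k ≤ 1 := pow_le_one₀ (by norm_num) (by norm_num)
      have e : 4 * (c (k+2) * (m/2) ^ (k+2)) = (c (k+2) * m ^ (k+2)) * (1/2) ^ k := by
        rw [div_pow, div_pow, pow_add 2]; field_simp; ring
      rw [e]
      exact mul_le_of_le_one_right (by positivity) this) a2 a1
    linarith
  · have := le_hasSum h1 1 (fun j _ => mul_nonneg (hc j) (by positivity))
    simpa using this

section
variable {μ : Measure ℝ} (h : Levy μ) {β : ℝ} (hβ : 0 ≤ β) (Ψ : ℝ → ℝ)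
  (hΨ : ∀ u, 0 < u → Ψ u = PP β μ u)
  (ν₀ : Measure ℝ) [IsFiniteMeasure ν₀] (hm : 0 < (ν₀ (Ioi 0)).toReal)
include h hβ hΨ hm

lemma existence : ∃ ν : ℝ → Measure ℝ, IsWeakSolutionWithData Ψ ν₀ ν := by
  set m0 := (ν₀ (Ioi 0)).toReal with hm0
  obtain ⟨u, hu0, hub, hup, huc, hud, hus⟩ := exists_flow h hβ hm
  have hus' : ∀ t : ℝ, ∃ c : ℕ → ℝ, (∀ k, 0 ≤ c k) ∧ c 0 = 0 ∧
      ∀ z, 0 ≤ z → z ≤ m0 → HasSum (fun k => c k * z^k) (u (max t 0) m0 - u (max t 0) (m0 - z)) :=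
    fun t => hus _ (le_max_right _ _)
  choose c hc hc0 hcs using hus'
  have hu00 : ∀ t, 0 ≤ t → u t 0 = 0 := fun t ht =>
    le_antisymm (hub 0 le_rfl hm.le t ht).2 (hub 0 le_rfl hm.le t ht).1
  let ν : ℝ → Measure ℝ := fun t => NU (c t) ν₀
  have hS : ∀ t, HasSum (fun k => c t k * m0 ^ k) (u (max t 0) m0) := by
    intro t
    have := hcs t m0 hm.le le_rfl
    rwa [sub_self, hu00 _ (le_max_right _ _), sub_zero] at this
  have huniv : ∀ t, ν t univ = ENNReal.ofReal (u (max t 0) m0) := fun t => NU_univ ν₀ (hc t) (hS t)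
  have hnull : ∀ t, ν t (Iic 0) = 0 := fun t => NU_null ν₀ (hc0 t)
  have hfin : ∀ t, IsFiniteMeasure (ν t) := fun t => ⟨by rw [huniv]; exact ENNReal.ofReal_lt_top⟩
  have hpos : ∀ t, 0 < u (max t 0) m0 := fun t => hup m0 hm le_rfl _ (le_max_right _ _)
  have hmass : ∀ t, (ν t (Ioi 0)).toReal = u (max t 0) m0 := by
    intro t
    have : ν t (Ioi 0) = ν t univ := by
      rw [← Measure.restrict_apply_univ, restrict_self (hnull t)]
    rw [this, huniv, ENNReal.toReal_ofReal (hpos t).le]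
  have hmpos : ∀ t, 0 < (ν t (Ioi 0)).toReal := fun t => by rw [hmass]; exact hpos t
  have hmle : ∀ t, (ν t (Ioi 0)).toReal ≤ m0 := fun t => by
    rw [hmass]; exact (hub m0 hm.le le_rfl _ (le_max_right _ _)).2
  let lam : ℕ → ℝ := fun j => ∫ x in Ioi (0:ℝ), Real.exp (-((j:ℝ) * x)) ∂ν₀
  have hl0 : ∀ j, 0 ≤ lam j := lam_nonneg ν₀
  have hl1 : ∀ j, lam j ≤ m0 := lam_le ν₀
  have hexp : ∀ (t : ℝ) (j : ℕ), ∫ x in Ioi (0:ℝ), Real.exp (-((j:ℝ) * x)) ∂(ν t)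
      = u (max t 0) m0 - u (max t 0) (m0 - lam j) := fun t j =>
    NU_exp ν₀ (hc t) (hc0 t) j (hcs t (lam j) (hl0 j) (hl1 j))
  have hPPc : ∀ x, 0 ≤ x → x ≤ m0 → ContinuousOn (fun τ => PP β μ (u τ x)) (Ici 0) := by
    intro x hx hxm
    rcases hx.eq_or_lt with rfl | hx'
    · refine (continuousOn_const (c := PP β μ 0)).congr fun τ hτ => ?_
      simp only [hu00 τ hτ]
    · intro τ hτ
      have h1 := hup x hx' hxm τ hτ
      exact ((h.hasDerivAt_PP (β := β) h1).continuousAt.comp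
        (f := fun τ => u τ x) (huc x).continuousAt).continuousWithinAt
  -- the equation for exponential polynomials
  have hLG : ∀ s a t, Lform Ψ (ν t) (GG s a) =
      ∑ j ∈ s, a j * (PP β μ (u (max t 0) (m0 - lam j)) - PP β μ (u (max t 0) m0)) := by
    intro s a t
    rw [Lform_GG h hβ Ψ hΨ (ν t) (hmpos t)]
    simp_rw [hexp, hmass, sub_sub_cancel]
  have hIG : ∀ s a t, ∫ x in Ioi (0:ℝ), GG s a x ∂(ν t) =
      ∑ j ∈ s, a j * (u (max t 0) m0 - u (max t 0) (m0 - lam j)) := by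
    intro s a t
    rw [int_GG]
    simp_rw [hexp]
  have hcD : ∀ (s : Finset ℕ) (a : ℕ → ℝ), ContinuousOn (fun t => ∑ j ∈ s, a j * (PP β μ (u t (m0 - lam j)) - PP β μ (u t m0))) (Ici 0) := by
    intro s a
    refine continuousOn_finset_sum _ fun j _ => ?_
    exact continuousOn_const.mul ((hPPc _ (by linarith [hl1 j]) (by linarith [hl0 j])).sub (hPPc m0 hm.le le_rfl))
  have hsub : ∀ s t : ℝ, 0 < s → 0 < t → uIcc s t ⊆ Ici 0 := by
    intro s t hs ht x hx
    exact (lt_min hs ht).le.trans hx.1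
  have heqG : ∀ S a s t, 0 < s → 0 < t → ∫ x in Ioi (0:ℝ), GG S a x ∂(ν t)
      = (∫ x in Ioi (0:ℝ), GG S a x ∂(ν s)) + ∫ τ in s..t, Lform Ψ (ν τ) (GG S a) := by
    intro S a s t hs ht
    have e : ∫ τ in s..t, Lform Ψ (ν τ) (GG S a)
        = ∫ τ in s..t, ∑ j ∈ S, a j * (PP β μ (u τ (m0 - lam j)) - PP β μ (u τ m0)) := by
      refine intervalIntegral.integral_congr fun τ hτ => ?_
      have h0 : max τ 0 = τ := max_eq_left (hsub s t hs ht hτ)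
      simp only [hLG, h0]
    rw [e, intervalIntegral.integral_eq_sub_of_hasDerivAt
      (f := fun τ => ∑ j ∈ S, a j * (u τ m0 - u τ (m0 - lam j)))]
    · simp only [hIG, max_eq_left hs.le, max_eq_left ht.le]; ring
    · intro τ hτ
      have h0 : 0 ≤ τ := hsub s t hs ht hτ
      refine HasDerivAt.fun_sum fun j _ => ?_
      have d1 := hud m0 hm.le le_rfl τ h0
      have d2 := hud (m0 - lam j) (by linarith [hl1 j]) (by linarith [hl0 j]) τ h0
      refine ((d1.sub d2).const_mul (a j)).congr_deriv ?_
      ring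
    · exact ((hcD S a).mono (hsub s t hs ht)).intervalIntegrable
  -- approximations
  have happ : ∀ f, IsTestFun f → ∃ M, BM M f ∧ ∃ (S : ℕ → Finset ℕ) (a : ℕ → ℕ → ℝ),
      ∀ n x, 0 < x → |f x - GG (S n) (a n) x| ≤ 1 / ((n:ℝ) + 1) := by
    intro f hf
    obtain ⟨M, hM⟩ := hf.bm
    refine ⟨M, hM, ?_⟩
    have := fun n : ℕ => approx hf (ε := 1 / ((n:ℝ) + 1)) (by positivity)
    choose S a hSa using this
    exact ⟨S, a, hSa⟩
  have hconv : ∀ (f : ℝ → ℝ) (M : ℝ) (S : ℕ → Finset ℕ) (a : ℕ → ℕ → ℝ), BM M f → (∀ (n:ℕ) x, 0 < x → |f x - GG (S n) (a n) x| ≤ 1 / ((n:ℝ) + 1)) →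
      ∀ t, Tendsto (fun n => ∫ x in Ioi (0:ℝ), GG (S n) (a n) x ∂(ν t)) atTop (𝓝 (∫ x in Ioi (0:ℝ), f x ∂(ν t))) := by
    intro f M S a hM hSa t
    rw [tendsto_iff_norm_sub_tendsto_zero]
    refine squeeze_zero (fun _ => norm_nonneg _) (g := fun n : ℕ => 1 / ((n:ℝ) + 1) * (ν t (Ioi 0)).toReal) (fun n => ?_) ?_
    · rw [norm_sub_rev]
      exact int_close (ν t) hM (BM.GG _ _) (hSa n)
    · simpa using tendsto_one_div_add_atTop_nhds_zero_nat.mul_const (ν t (Ioi 0)).toReal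
  refine ⟨ν, fun t _ => ⟨hfin t, ?_, hnull t⟩, ?_, ?_, ?_⟩
  · intro h0
    have := hmpos t
    simp [h0] at this
  · intro f hf
    obtain ⟨M, hM, S, a, hSa⟩ := happ f hf
    refine measurable_of_tendsto_metrizable (f := fun n t => ∫ x in Ioi (0:ℝ), GG (S n) (a n) x ∂(ν t)) (fun n => ?_)
      (tendsto_pi_nhds.2 (hconv f M S a hM hSa))
    simp_rw [hIG]
    have hcm : ∀ x, Continuous fun t => u (max t 0) x := fun x => (huc x).comp (continuous_id.max continuous_const)
    refine Continuous.measurable ?_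
    exact continuous_finset_sum _ fun j _ => continuous_const.mul ((hcm _).sub (hcm _))
  · intro f hf s t hs ht
    obtain ⟨M, hM, S, a, hSa⟩ := happ f hf
    have hPD0 : 0 ≤ PD β μ m0 := h.PD_nonneg hβ hm.le
    have hK : ∀ τ, (ν τ (Ioi 0)).toReal * PD β μ (ν τ (Ioi 0)).toReal ≤ m0 * PD β μ m0 := by
      intro τ
      refine mul_le_mul (hmle τ) (h.PD_mono hβ (hmpos τ).le (hmle τ)) (h.PD_nonneg hβ (hmpos τ).le) hm.le
    have hGM : ∀ n, BM (M + 1) (GG (S n) (a n)) := by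
      intro n
      refine ⟨(BM.GG _ _).1, fun x hx => ?_⟩
      have h1 := hSa n x hx
      have h2 := hM.2 x hx
      have h3 : 1 / ((n:ℝ) + 1) ≤ 1 := by
        rw [div_le_one (by positivity)]
        linarith [(Nat.cast_nonneg n : (0:ℝ) ≤ n)]
      rw [abs_le] at *
      constructor <;> linarith
    have hlim : Tendsto (fun n => ∫ τ in s..t, Lform Ψ (ν τ) (GG (S n) (a n))) atTop
        (𝓝 (∫ τ in s..t, Lform Ψ (ν τ) f)) := by
      refine intervalIntegral.tendsto_integral_filter_of_dominated_convergence
        (fun _ => 2 * (M + 1) * (m0 * PD β μ m0)) (Eventually.of_forall fun n => ?_)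
        (Eventually.of_forall fun n => Eventually.of_forall fun τ _ => ?_) intervalIntegrable_const
        (Eventually.of_forall fun τ _ => ?_)
      · have : ContinuousOn (fun τ => Lform Ψ (ν τ) (GG (S n) (a n))) (uIoc s t) := by
          refine ((hcD (S n) (a n)).mono (uIoc_subset_uIcc.trans (hsub s t hs ht))).congr fun τ hτ => ?_
          have h0 : max τ 0 = τ := max_eq_left (hsub s t hs ht (uIoc_subset_uIcc hτ))
          simp only [hLG, h0]
        exact this.aestronglyMeasurable measurableSet_uIoc
      · refine (Lform_le h hβ Ψ hΨ (ν τ) (hmpos τ) (hGM n)).trans ?_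
        have := (hGM n).nonneg
        exact mul_le_mul_of_nonneg_left (hK τ) (by positivity)
      · rw [tendsto_iff_norm_sub_tendsto_zero]
        refine squeeze_zero (fun _ => norm_nonneg _) (g := fun n : ℕ => 2 * (1 / ((n:ℝ) + 1)) * (m0 * PD β μ m0)) (fun n => ?_) ?_
        · have hl := Lform_lin h hβ Ψ hΨ (ν τ) (hmpos τ) (hGM n) hM 1 (-1)
          have hb : BM (1 / ((n:ℝ) + 1)) (fun x => 1 * GG (S n) (a n) x + (-1) * f x) := by
            refine ⟨((hGM n).lin hM 1 (-1)).1, fun x hx => ?_⟩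
            have := hSa n x hx
            rw [abs_sub_comm] at this
            convert this using 2
            ring
          have hb2 := Lform_le h hβ Ψ hΨ (ν τ) (hmpos τ) hb
          rw [hl] at hb2
          have e : 1 * Lform Ψ (ν τ) (GG (S n) (a n)) + -1 * Lform Ψ (ν τ) f
            = Lform Ψ (ν τ) (GG (S n) (a n)) - Lform Ψ (ν τ) f := by ring
          rw [e] at hb2
          refine hb2.trans (mul_le_mul_of_nonneg_left (hK τ) (by positivity))
        · simpa using (tendsto_one_div_add_atTop_nhds_zero_nat.const_mul (2:ℝ)).mul_const (m0 * PD β μ m0)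
    have h1 := hconv f M S a hM hSa t
    have h2 := (hconv f M S a hM hSa s).add hlim
    refine tendsto_nhds_unique h1 (h2.congr fun n => ?_)
    exact (heqG (S n) (a n) s t hs ht).symm
  · intro f hfc ⟨M, hM⟩
    have hb := BM.of_cont hfc hM
    have hcm : ∀ x, Tendsto (fun t => u (max t 0) x) (𝓝[>] 0) (𝓝 x) := by
      intro x
      have : Continuous fun t => u (max t 0) x := (huc x).comp (continuous_id.max continuous_const)
      have h2 := this.tendsto 0
      simp only [max_self, hu0] at h2
      exact h2.mono_left nhdsWithin_le_nhds
    have hb1 : ∀ t, 4 * (u (max t 0) m0 - u (max t 0) (m0 - m0/2)) - u (max t 0) m0 ≤ c t 1 * m0 ∧ c t 1 * m0 ≤ u (max t 0) m0 :=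
      fun t => c1_bound (hc t) (hc0 t) hm (hS t) (hcs t (m0/2) (by linarith) (by linarith))
    have hc1m : Tendsto (fun t => c t 1 * m0) (𝓝[>] 0) (𝓝 m0) := by
      refine tendsto_of_tendsto_of_tendsto_of_le_of_le ?_ (hcm m0) (fun t => (hb1 t).1) (fun t => (hb1 t).2)
      have := (((hcm m0).sub (hcm (m0 - m0/2))).const_mul 4).sub (hcm m0)
      convert this using 2
      ring
    have hc1 : Tendsto (fun t => c t 1) (𝓝[>] 0) (𝓝 1) := by
      have := hc1m.div_const m0
      simpa [hm.ne'] using this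
    have hz : Tendsto (fun t => ∫ x in Ioi (0:ℝ), f x ∂(ν t) - c t 1 * ∫ x in Ioi (0:ℝ), f x ∂ν₀) (𝓝[>] 0) (𝓝 0) := by
      refine squeeze_zero_norm (a := fun t => M * (u (max t 0) m0 - c t 1 * m0)) (fun t => ?_) ?_
      · exact NU_close ν₀ (hc t) (hc0 t) (hS t) hb
      · simpa using ((hcm m0).sub hc1m).const_mul M
    have := hz.add (hc1.mul_const (∫ x in Ioi (0:ℝ), f x ∂ν₀))
    simpa using this

end

section
variable {μ : Measure ℝ} (h : Levy μ) {β : ℝ} (hβ : 0 ≤ β)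
include h hβ

lemma PP_abs_le {K u v : ℝ} (hu : 0 ≤ u) (hv : 0 ≤ v) (huK : u ≤ K) (hvK : v ≤ K) :
    |PP β μ u - PP β μ v| ≤ PD β μ K * |u - v| := by
  wlog huv : v ≤ u generalizing u v
  · rw [abs_sub_comm, abs_sub_comm u v]
    exact this hv hu hvK huK (le_of_not_ge huv)
  rw [abs_of_nonneg (sub_nonneg.2 (h.PP_mono hβ hv huv)), abs_of_nonneg (sub_nonneg.2 huv)]
  exact (h.PP_sub_le hβ hv huv).trans
    (mul_le_mul_of_nonneg_right (h.PD_mono hβ hu huK) (sub_nonneg.2 huv))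

lemma sol_antitone {φ : ℝ → ℝ} (h0 : ∀ t, 0 < t → 0 ≤ φ t)
    (he : ∀ s t, 0 < s → 0 < t → φ t = φ s + ∫ τ in s..t, -PP β μ (φ τ)) : AntitoneOn φ (Ioi 0) := by
  intro s hs t ht hst
  rw [he s t hs ht, intervalIntegral.integral_neg]
  have : 0 ≤ ∫ τ in s..t, PP β μ (φ τ) :=
    intervalIntegral.integral_nonneg hst fun τ hτ => h.PP_nonneg hβ (h0 τ (lt_of_lt_of_le hs hτ.1))
  linarith

lemma sol_deriv {φ : ℝ → ℝ} (h0 : ∀ t, 0 < t → 0 ≤ φ t)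
    (he : ∀ s t, 0 < s → 0 < t → φ t = φ s + ∫ τ in s..t, -PP β μ (φ τ)) {t : ℝ} (ht : 0 < t) :
    HasDerivAt φ (-PP β μ (φ t)) t := by
  have ha := sol_antitone h hβ h0 he
  have hc : ∀ t, 0 < t → ContinuousAt φ t := by
    intro t ht
    have ht2 : (0:ℝ) < t / 2 := by linarith
    unfold ContinuousAt
    rw [tendsto_iff_norm_sub_tendsto_zero]
    refine squeeze_zero' (g := fun τ => PP β μ (φ (t/2)) * |τ - t|) (Eventually.of_forall fun _ => norm_nonneg _) ?_ ?_
    · filter_upwards [Ioi_mem_nhds (show t / 2 < t by linarith)] with τ hτ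
      have hτ' : t / 2 < τ := hτ
      rw [he t τ ht (ht2.trans hτ), add_sub_cancel_left]
      refine intervalIntegral.norm_integral_le_of_norm_le_const fun x hx => ?_
      have hx2 : t / 2 < x := lt_of_le_of_lt (le_min (by linarith) hτ'.le) hx.1
      rw [norm_neg, Real.norm_eq_abs, abs_of_nonneg (h.PP_nonneg hβ (h0 x (ht2.trans hx2)))]
      exact h.PP_mono hβ (h0 x (ht2.trans hx2)) (ha ht2 (ht2.trans hx2) hx2.le)
    · have : Continuous (fun τ => PP β μ (φ (t/2)) * |τ - t|) := by fun_prop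
      have := this.tendsto t
      simpa using this
  have hcP : ∀ t, 0 < t → ContinuousAt (fun τ => -PP β μ (φ τ)) t := by
    intro t ht
    refine ContinuousAt.neg ?_
    have ht2 : (0:ℝ) < t / 2 := by linarith
    unfold ContinuousAt
    rw [tendsto_iff_norm_sub_tendsto_zero]
    refine squeeze_zero' (g := fun τ => PD β μ (φ (t/2)) * |φ τ - φ t|) (Eventually.of_forall fun _ => norm_nonneg _) ?_ ?_
    · filter_upwards [Ioi_mem_nhds (show t / 2 < t by linarith)] with τ hτ
      have hτ' : t / 2 < τ := hτ
      exact PP_abs_le h hβ (h0 _ (ht2.trans hτ')) (h0 _ ht) (ha ht2 (ht2.trans hτ') hτ'.le) (ha ht2 ht (by linarith))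
    · have h1 := ((hc t ht).sub (continuousAt_const (y := φ t))).abs.const_mul (PD β μ (φ (t/2)))
      simpa [ContinuousAt] using h1
  have hcO : ContinuousOn (fun τ => -PP β μ (φ τ)) (Ioi 0) := fun x hx => (hcP x hx).continuousWithinAt
  have hd := intervalIntegral.integral_hasDerivAt_right (f := fun τ => -PP β μ (φ τ)) (a := t) (b := t)
    (by simp) (hcO.stronglyMeasurableAtFilter isOpen_Ioi t ht) (hcP t ht)
  refine (hd.const_add (φ t)).congr_of_eventuallyEq ?_
  filter_upwards [Ioi_mem_nhds ht] with τ hτ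
  exact he t τ ht hτ

lemma sol_unique {φ ψ : ℝ → ℝ} (h0 : ∀ t, 0 < t → 0 ≤ φ t)
    (he : ∀ s t, 0 < s → 0 < t → φ t = φ s + ∫ τ in s..t, -PP β μ (φ τ))
    (h0' : ∀ t, 0 < t → 0 ≤ ψ t)
    (he' : ∀ s t, 0 < s → 0 < t → ψ t = ψ s + ∫ τ in s..t, -PP β μ (ψ τ))
    {l : ℝ} (hl : Tendsto φ (𝓝[>] 0) (𝓝 l)) (hl' : Tendsto ψ (𝓝[>] 0) (𝓝 l)) {t : ℝ} (ht : 0 < t) :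
    φ t = ψ t := by
  have hd : ∀ t, 0 < t → HasDerivAt (fun t => (φ t - ψ t) ^ 2)
      (2 * (φ t - ψ t) * (-PP β μ (φ t) - -PP β μ (ψ t))) t := by
    intro t ht
    have := ((sol_deriv h hβ h0 he ht).fun_sub (sol_deriv h hβ h0' he' ht)).fun_pow 2
    simpa using this
  have ha : AntitoneOn (fun t => (φ t - ψ t) ^ 2) (Ioi 0) := by
    refine antitoneOn_of_deriv_nonpos (convex_Ioi 0) (fun x hx => (hd x hx).continuousAt.continuousWithinAt) ?_ ?_
    · rw [interior_Ioi]
      exact fun x hx => (hd x hx).differentiableAt.differentiableWithinAt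
    · rw [interior_Ioi]
      intro x hx
      rw [(hd x hx).deriv]
      rcases le_total (φ x) (ψ x) with hle | hle
      · have := h.PP_mono hβ (h0 x hx) hle
        nlinarith
      · have := h.PP_mono hβ (h0' x hx) hle
        nlinarith
  have hlim : Tendsto (fun t => (φ t - ψ t) ^ 2) (𝓝[>] 0) (𝓝 0) := by
    simpa using (hl.sub hl').pow 2
  have : (φ t - ψ t) ^ 2 ≤ 0 := by
    refine ge_of_tendsto hlim ?_
    filter_upwards [Ioo_mem_nhdsGT ht] with s hs
    exact ha hs.1 ht hs.2.le
  have := pow_eq_zero_iff (two_ne_zero) |>.1 (le_antisymm this (sq_nonneg _))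
  linarith

lemma uniq_fun (Ψ : ℝ → ℝ) (hΨ : ∀ u, 0 < u → Ψ u = PP β μ u) {ν₀ : Measure ℝ} {ν ν' : ℝ → Measure ℝ}
    (hν : IsWeakSolutionWithData Ψ ν₀ ν) (hν' : IsWeakSolutionWithData Ψ ν₀ ν')
    {f : ℝ → ℝ} (hf : IsTestFun f)
    (hL : ∀ (κ : Measure ℝ) [IsFiniteMeasure κ], 0 < (κ (Ioi 0)).toReal → 0 ≤ ∫ x in Ioi (0:ℝ), f x ∂κ ∧
      Lform Ψ κ f = -PP β μ (∫ x in Ioi (0:ℝ), f x ∂κ)) {t : ℝ} (ht : 0 < t) :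
    ∫ x in Ioi (0:ℝ), f x ∂(ν t) = ∫ x in Ioi (0:ℝ), f x ∂(ν' t) := by
  have hL' : ∀ ν : ℝ → Measure ℝ, IsWeakSolutionWithData Ψ ν₀ ν → ∀ t, 0 < t →
      0 ≤ ∫ x in Ioi (0:ℝ), f x ∂(ν t) ∧ Lform Ψ (ν t) f = -PP β μ (∫ x in Ioi (0:ℝ), f x ∂(ν t)) := by
    intro ν hν t ht
    obtain ⟨h1, h2, -⟩ := hν.1 t ht
    exact hL (ν t) (ENNReal.toReal_pos h2 (measure_ne_top _ _))
  have he : ∀ ν : ℝ → Measure ℝ, IsWeakSolutionWithData Ψ ν₀ ν → ∀ s t, 0 < s → 0 < t →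
      ∫ x in Ioi (0:ℝ), f x ∂(ν t) = ∫ x in Ioi (0:ℝ), f x ∂(ν s) +
        ∫ τ in s..t, -PP β μ (∫ x in Ioi (0:ℝ), f x ∂(ν τ)) := by
    intro ν hν s t hs ht
    rw [hν.2.2.1 f hf s t hs ht]
    congr 1
    refine intervalIntegral.integral_congr fun τ hτ => ?_
    exact (hL' ν hν τ (lt_of_lt_of_le (lt_min hs ht) hτ.1)).2
  exact sol_unique h hβ (φ := fun t => ∫ x in Ioi (0:ℝ), f x ∂(ν t)) (ψ := fun t => ∫ x in Ioi (0:ℝ), f x ∂(ν' t))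
    (fun t ht => (hL' ν hν t ht).1) (he ν hν) (fun t ht => (hL' ν' hν' t ht).1) (he ν' hν')
    (hν.2.2.2 f hf.1 hf.2.1) (hν'.2.2.2 f hf.1 hf.2.1) ht

lemma uniqueness (Ψ : ℝ → ℝ) (hΨ : ∀ u, 0 < u → Ψ u = PP β μ u) {ν₀ : Measure ℝ} {ν ν' : ℝ → Measure ℝ}
    (hν : IsWeakSolutionWithData Ψ ν₀ ν) (hν' : IsWeakSolutionWithData Ψ ν₀ ν') {t : ℝ} (ht : 0 < t) :
    ν t = ν' t := by
  obtain ⟨h1, -, h3⟩ := hν.1 t ht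
  obtain ⟨h1', -, h3'⟩ := hν'.1 t ht
  refine measure_unique _ _ h3 h3' fun j => ?_
  have e0 : ∫ x in Ioi (0:ℝ), Real.exp (-(((0:ℕ):ℝ) * x)) ∂(ν t)
      = ∫ x in Ioi (0:ℝ), Real.exp (-(((0:ℕ):ℝ) * x)) ∂(ν' t) := by
    refine uniq_fun h hβ Ψ hΨ hν hν' (IsTestFun.exp 0) (fun κ _ hκ => ⟨lam_nonneg κ 0, ?_⟩) ht
    rw [Lform_exp h hβ Ψ hΨ κ hκ 0, mass_zero, sub_self, h.PP_zero, zero_sub]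
  have hI : ∀ (κ : Measure ℝ) [IsFiniteMeasure κ],
      ∫ x in Ioi (0:ℝ), (1 * Real.exp (-(((0:ℕ):ℝ) * x)) + -1 * Real.exp (-((j:ℝ) * x))) ∂κ
      = (κ (Ioi 0)).toReal - ∫ x in Ioi (0:ℝ), Real.exp (-((j:ℝ) * x)) ∂κ := by
    intro κ _
    rw [integral_add ((int_one κ (BM.exp 0)).const_mul 1) ((int_one κ (BM.exp j)).const_mul (-1)),
      integral_const_mul, integral_const_mul, mass_zero]
    ring
  have e1 : ∫ x in Ioi (0:ℝ), (1 * Real.exp (-(((0:ℕ):ℝ) * x)) + -1 * Real.exp (-((j:ℝ) * x))) ∂(ν t)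
      = ∫ x in Ioi (0:ℝ), (1 * Real.exp (-(((0:ℕ):ℝ) * x)) + -1 * Real.exp (-((j:ℝ) * x))) ∂(ν' t) := by
    refine uniq_fun h hβ Ψ hΨ hν hν' (f := fun x => (1 * Real.exp (-(((0:ℕ):ℝ) * x)) + -1 * Real.exp (-((j:ℝ) * x)))) ?_ (fun κ _ hκ => ⟨?_, ?_⟩) ht
    · have := IsTestFun.comp_exp (g := fun y => 1 * y ^ 0 + (-1) * y ^ j) (by fun_prop)
      convert this using 2 with x
      rw [← Real.exp_nat_mul, ← Real.exp_nat_mul]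
      congr 3 <;> ring
    · rw [hI]
      linarith [lam_le κ j]
    · rw [hI, Lform_lin h hβ Ψ hΨ κ hκ (BM.exp 0) (BM.exp j), Lform_exp h hβ Ψ hΨ κ hκ 0, Lform_exp h hβ Ψ hΨ κ hκ j,
        mass_zero, sub_self, h.PP_zero]
      ring
  rw [hI, hI, ← mass_zero, ← mass_zero, e0] at e1
  linarith
end

theorem exists_unique_weak_solution
    (Ψ : ℝ → ℝ) (β : ℝ) (π : Measure ℝ)
    (hβ : 0 ≤ β)
    (hπfin : ∫⁻ x in Ioi (0:ℝ), ENNReal.ofReal (min x (x ^ 2)) ∂π < ⊤)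
    (hΨ : ∀ u : ℝ, 0 < u →
      Ψ u = β * u ^ 2 + ∫ x in Ioi (0:ℝ), (Real.exp (-(u * x)) - 1 + u * x) ∂π)
    (ν₀ : Measure ℝ) (hν₀fin : IsFiniteMeasure ν₀)
    (hν₀c : ν₀ (Iic 0) = 0) (hν₀nz : ν₀ (Ioi 0) ≠ 0) :
    ∃ ν : ℝ → Measure ℝ, IsWeakSolutionWithData Ψ ν₀ ν ∧
      ∀ ν' : ℝ → Measure ℝ, IsWeakSolutionWithData Ψ ν₀ ν' →
        ∀ t : ℝ, 0 < t → ν' t = ν t := by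
  have h : Levy (π.restrict (Ioi 0)) := by
    have hp : ∀ᵐ x ∂(π.restrict (Ioi 0)), (0:ℝ) < x := ae_restrict_mem measurableSet_Ioi
    refine ⟨hp, (by fun_prop : Measurable fun x : ℝ => min x (x ^ 2)).aestronglyMeasurable, ?_⟩
    rw [hasFiniteIntegral_iff_ofReal]
    · exact hπfin
    · filter_upwards [hp] with x hx
      exact le_min hx.le (sq_nonneg x)
  obtain ⟨ν, hν⟩ := existence h hβ Ψ hΨ ν₀ (ENNReal.toReal_pos hν₀nz (measure_ne_top _ _))
  exact ⟨ν, hν, fun ν' hν' t ht => uniqueness h hβ Ψ hΨ hν' hν ht⟩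
end
end

section
/- Let 1 < γ ≤ 2, β > 0 and 0 < ρ ≤ 1. Then there exists a Borel probability measure F on (0,∞) with ∫_{(0,∞)} (1 − e^{−qx}) F(dx) = (1 + q^{−ρ(γ−1)})^{−1/(γ−1)} for all q > 0. Moreover, setting a(t) = [(γ−1)βt]^{1/(1−γ)} for t > 0 and defining the finite measures μ_t(A) = a(t) · F({a(t)^{1/ρ} x : x ∈ A}) for Borel sets A ⊆ (0,∞), one has ∫_{(0,∞)} (1 − e^{−qx}) μ_t(dx) = [(γ−1)βt + q^{−ρ(γ−1)}]^{−1/(γ−1)} for all t, q > 0; in particular this function φ(t,q) satisfies ∂_t φ = −β φ^γ with lim_{t→0⁺} φ(t,q) = q^ρ. -/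
open MeasureTheory Set Filter Real

noncomputable section

/-- moment functions of probability measures on the unit interval -/
def IsMom (L : ℝ → ℝ) : Prop :=
  ∃ μ : ProbabilityMeasure unitInterval, ∀ q : ℝ, 0 < q →
    ∫ x, (x : ℝ) ^ q ∂(μ : Measure unitInterval) = L q

lemma cont_pow (q : ℝ) (hq : 0 < q) : Continuous (fun x : unitInterval => (x : ℝ) ^ q) :=
  continuous_subtype_val.rpow_const (fun _ => Or.inr hq.le)

lemma isMom_one : IsMom (fun _ => 1) := by
  refine ⟨⟨Measure.dirac 1, inferInstance⟩, fun q hq => ?_⟩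
  simp

lemma isMom_mul {L M : ℝ → ℝ} (hL : IsMom L) (hM : IsMom M) : IsMom (fun q => L q * M q) := by
  obtain ⟨μ, hμ⟩ := hL
  obtain ⟨ν, hν⟩ := hM
  have hm : Measurable (fun p : unitInterval × unitInterval => p.1 * p.2) :=
    (continuous_fst.mul continuous_snd).measurable
  refine ⟨⟨((μ : Measure unitInterval).prod (ν : Measure unitInterval)).map
    (fun p => p.1 * p.2), Measure.isProbabilityMeasure_map hm.aemeasurable⟩, fun q hq => ?_⟩
  simp only [ProbabilityMeasure.coe_mk]
  rw [integral_map hm.aemeasurable (cont_pow q hq).aestronglyMeasurable, ← hμ q hq, ← hν q hq,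
    ← integral_prod_mul]
  refine integral_congr_ae (ae_of_all _ fun p => ?_)
  simp only [Set.Icc.coe_mul]
  exact mul_rpow p.1.2.1 p.2.2.1

lemma isMom_pow {L : ℝ → ℝ} (hL : IsMom L) (n : ℕ) : IsMom (fun q => L q ^ n) := by
  induction n with
  | zero => simpa using isMom_one
  | succ n ih => simpa [pow_succ] using isMom_mul ih hL

lemma isMom_lim {L : ℕ → ℝ → ℝ} {M : ℝ → ℝ} (hL : ∀ᶠ n in atTop, IsMom (L n))
    (h : ∀ q, 0 < q → Tendsto (fun n => L n q) atTop (nhds (M q))) : IsMom M := by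
  classical
  let ν : ℕ → ProbabilityMeasure unitInterval := fun n =>
    if h : IsMom (L n) then h.choose else ⟨Measure.dirac 1, inferInstance⟩
  have hν : ∀ᶠ n in atTop, ∀ q : ℝ, 0 < q →
      ∫ x, (x : ℝ) ^ q ∂(ν n : Measure unitInterval) = L n q := by
    filter_upwards [hL] with n hn
    have : ν n = hn.choose := by simp [ν, hn]
    rw [this]
    exact hn.choose_spec
  let U : Ultrafilter ℕ := Ultrafilter.of atTop
  have hU : (U : Filter ℕ) ≤ atTop := Ultrafilter.of_le atTop
  obtain ⟨μ, -, hμ⟩ := isCompact_univ.ultrafilter_le_nhds (U.map ν) (by simp)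
  have hμ' : Tendsto ν U (nhds μ) := hμ
  refine ⟨μ, fun q hq => ?_⟩
  have h1 := (ProbabilityMeasure.tendsto_iff_forall_integral_tendsto.1 hμ')
    (BoundedContinuousFunction.mkOfCompact ⟨_, cont_pow q hq⟩)
  have h2 := (h q hq).mono_left hU
  refine tendsto_nhds_unique h1 (h2.congr' ?_)
  filter_upwards [hU hν] with n hn
  simpa using (hn q hq).symm

lemma isMom_exp (ν : Measure ℝ) [IsFiniteMeasure ν] :
    IsMom (fun q => exp (-∫ x, (1 - exp (-(q * |x|))) ∂ν)) := by
  let g : ℝ → unitInterval := fun x => ⟨exp (-|x|), (exp_pos _).le, by simp⟩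
  have hg : Measurable g := by
    refine Measurable.subtype_mk ?_
    fun_prop
  set m := ν.real univ with hm
  refine isMom_lim (L := fun n q => (1 + (-∫ x, (1 - exp (-(q * |x|))) ∂ν) / n) ^ n) ?_
    (fun q hq => Real.tendsto_one_add_div_pow_exp _)
  obtain ⟨N, hN⟩ := exists_nat_gt m
  filter_upwards [eventually_ge_atTop (N + 1)] with n hn
  have hn0 : (0 : ℝ) < n := by exact_mod_cast (by omega : 0 < n)
  have hmn : m ≤ n := hN.le.trans (by exact_mod_cast (by omega : N ≤ n))
  apply isMom_pow (L := fun q => (1 + (-∫ x, (1 - exp (-(q * |x|))) ∂ν) / n))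
  have hc : 0 ≤ 1 - m / n := by rw [sub_nonneg, div_le_one hn0]; exact hmn
  let P : Measure unitInterval := ENNReal.ofReal (1 - m / n) • Measure.dirac 1 +
    ENNReal.ofReal (1 / n) • ν.map g
  have hP : IsProbabilityMeasure P := by
    constructor
    simp only [P, Measure.add_apply, Measure.smul_apply, smul_eq_mul,
      Measure.map_apply hg MeasurableSet.univ, preimage_univ, measure_univ, mul_one]
    rw [← ofReal_measureReal (μ := ν), ← ENNReal.ofReal_mul (by positivity), ← hm,
      ← ENNReal.ofReal_add hc (by positivity)]
    rw [show 1 - m / n + 1 / n * m = 1 by ring]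
    simp
  refine ⟨⟨P, hP⟩, fun q hq => ?_⟩
  have hi : ∀ κ : Measure unitInterval, IsFiniteMeasure κ →
      Integrable (fun x : unitInterval => (x : ℝ) ^ q) κ := fun κ _ => by
    refine Integrable.of_bound (cont_pow q hq).aestronglyMeasurable 1 (ae_of_all _ fun x => ?_)
    rw [norm_of_nonneg (rpow_nonneg x.2.1 _)]
    exact rpow_le_one x.2.1 x.2.2 hq.le
  have hi2 : Integrable (fun x : ℝ => exp (-(q * |x|))) ν := by
    refine Integrable.of_bound (by fun_prop) 1 (ae_of_all _ fun x => ?_)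
    rw [norm_of_nonneg (exp_pos _).le]
    simp; positivity
  simp only [ProbabilityMeasure.coe_mk, P]
  rw [integral_add_measure ((hi _ inferInstance).smul_measure (by simp))
    ((hi _ (Measure.isFiniteMeasure_map _ _)).smul_measure (by simp)),
    integral_smul_measure, integral_smul_measure, integral_dirac,
    integral_map hg.aemeasurable (cont_pow q hq).aestronglyMeasurable,
    integral_sub (integrable_const _) hi2]
  have : ∀ x, ((g x : ℝ)) ^ q = exp (-(q * |x|)) := fun x => by
    simp only [g]
    rw [← exp_mul]; congr 1; ring
  simp only [this, ENNReal.toReal_ofReal hc, ENNReal.toReal_ofReal (by positivity : 0 ≤ 1 / (n:ℝ))]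
  simp only [Set.Icc.coe_one, one_rpow, smul_eq_mul, integral_const, ← hm]
  field_simp
  ring

lemma lev_integrable {ρ : ℝ} (h0 : 0 < ρ) (h1 : ρ < 1) {q : ℝ} (hq : 0 < q) :
    IntegrableOn (fun x : ℝ => x ^ (-1 - ρ) * (1 - exp (-(q * x)))) (Ioi 0) := by
  have hmeas : ∀ s : Set ℝ, AEStronglyMeasurable
      (fun x : ℝ => x ^ (-1 - ρ) * (1 - exp (-(q * x)))) (volume.restrict s) := fun s => by
    apply Measurable.aestronglyMeasurable
    fun_prop
  have hb : ∀ x : ℝ, 0 < x → 0 ≤ 1 - exp (-(q * x)) := fun x hx => by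
    have : exp (-(q * x)) ≤ 1 := by rw [exp_le_one_iff]; have := mul_pos hq hx; linarith
    linarith
  rw [← Ioc_union_Ioi_eq_Ioi (zero_le_one' ℝ)]
  refine IntegrableOn.union ?_ ?_
  · have hi : IntegrableOn (fun x : ℝ => q * x ^ (-ρ)) (Ioc 0 1) := by
      have := intervalIntegral.intervalIntegrable_rpow' (a := 0) (b := 1) (r := -ρ) (by linarith)
      rw [intervalIntegrable_iff_integrableOn_Ioc_of_le zero_le_one] at this
      exact this.const_mul q
    refine Integrable.mono' hi (hmeas _) ?_
    rw [ae_restrict_iff' measurableSet_Ioc]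
    refine ae_of_all _ fun x hx => ?_
    rw [norm_of_nonneg (mul_nonneg (rpow_nonneg hx.1.le _) (hb x hx.1))]
    have e : x ^ (-ρ) = x ^ (-1 - ρ) * x := by
      rw [← rpow_add_one hx.1.ne']; congr 1; ring
    rw [e]
    have := add_one_le_exp (-(q * x))
    have h2 := rpow_nonneg hx.1.le (-1 - ρ)
    nlinarith
  · have hi : IntegrableOn (fun x : ℝ => x ^ (-1 - ρ)) (Ioi 1) :=
      integrableOn_Ioi_rpow_of_lt (by linarith) one_pos
    refine Integrable.mono' hi (hmeas _) ?_
    rw [ae_restrict_iff' measurableSet_Ioi]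
    refine ae_of_all _ fun x hx => ?_
    have hx0 : 0 < x := lt_trans one_pos hx
    rw [norm_of_nonneg (mul_nonneg (rpow_nonneg hx0.le _) (hb x hx0))]
    have := exp_pos (-(q * x))
    have h2 := rpow_nonneg hx0.le (-1 - ρ)
    nlinarith

lemma lev_scale {ρ : ℝ} {q : ℝ} (hq : 0 < q) :
    ∫ x in Ioi (0:ℝ), x ^ (-1 - ρ) * (1 - exp (-(q * x))) =
      (∫ x in Ioi (0:ℝ), x ^ (-1 - ρ) * (1 - exp (-x))) * q ^ ρ := by
  have h := integral_comp_mul_left_Ioi (fun x : ℝ => x ^ (-1 - ρ) * (1 - exp (-x))) 0 hq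
  rw [mul_zero, smul_eq_mul] at h
  have h2 : ∫ x in Ioi (0:ℝ), (q * x) ^ (-1 - ρ) * (1 - exp (-(q * x))) =
      q ^ (-1 - ρ) * ∫ x in Ioi (0:ℝ), x ^ (-1 - ρ) * (1 - exp (-(q * x))) := by
    rw [← integral_const_mul]
    refine setIntegral_congr_fun measurableSet_Ioi fun x hx => ?_
    rw [mul_rpow hq.le (le_of_lt hx)]; ring
  rw [h2] at h
  have h3 : q ^ (-1 - ρ) * (q * q ^ ρ) = 1 := by
    rw [mul_comm q, ← rpow_add_one hq.ne', ← rpow_add hq, show -1 - ρ + (ρ + 1) = 0 by ring, rpow_zero]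
  have h4 : (0:ℝ) < q ^ (-1 - ρ) := rpow_pos_of_pos hq _
  apply mul_left_cancel₀ h4.ne'
  rw [h]
  generalize (∫ x in Ioi (0:ℝ), x ^ (-1 - ρ) * (1 - exp (-x))) = J
  have : q⁻¹ * (q ^ (-1 - ρ) * (q * q ^ ρ)) * J = q⁻¹ * J := by rw [h3]; ring
  rw [← this]
  field_simp

lemma isMom_stable {ρ : ℝ} (h0 : 0 < ρ) (h1 : ρ < 1) :
    IsMom (fun q => exp (-((∫ x in Ioi (0:ℝ), x ^ (-1 - ρ) * (1 - exp (-x))) * q ^ ρ))) := by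
  let ν : ℕ → Measure ℝ := fun n =>
    (volume.restrict (Ioi (1 / ((n : ℝ) + 1)))).withDensity (fun x => ENNReal.ofReal (x ^ (-1 - ρ)))
  have hpos : ∀ n : ℕ, (0:ℝ) < 1 / ((n : ℝ) + 1) := fun n => by positivity
  have hfin : ∀ n, IsFiniteMeasure (ν n) := fun n => by
    refine isFiniteMeasure_withDensity_ofReal ?_
    exact (integrableOn_Ioi_rpow_of_lt (by linarith) (hpos n)).2
  refine isMom_lim (Eventually.of_forall fun n => isMom_exp (ν n)) fun q hq => ?_
  rw [← lev_scale hq]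
  refine (continuous_exp.tendsto _).comp (Tendsto.neg ?_)
  have hU : (⋃ n : ℕ, Ioi (1 / ((n : ℝ) + 1))) = Ioi (0:ℝ) := by
    ext x
    simp only [mem_iUnion, mem_Ioi]
    exact ⟨fun ⟨n, hn⟩ => (hpos n).trans hn, fun hx => exists_nat_one_div_lt hx⟩
  have hlim := tendsto_setIntegral_of_monotone (μ := volume)
    (s := fun n : ℕ => Ioi (1 / ((n : ℝ) + 1)))
    (f := fun x : ℝ => x ^ (-1 - ρ) * (1 - exp (-(q * x))))
    (fun _ => measurableSet_Ioi)
    (fun a b hab => Ioi_subset_Ioi (one_div_le_one_div_of_le (by positivity)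
      (by have : (a:ℝ) ≤ b := by exact_mod_cast hab
          linarith)))
    (by rw [hU]; exact lev_integrable h0 h1 hq)
  rw [hU] at hlim
  refine hlim.congr fun n => ?_
  simp only [ν]
  rw [integral_withDensity_eq_integral_toReal_smul (by fun_prop) (by simp)]
  refine setIntegral_congr_fun measurableSet_Ioi fun x hx => ?_
  have hx0 : 0 < x := (hpos n).trans hx
  rw [ENNReal.toReal_ofReal (rpow_nonneg hx0.le _), abs_of_pos hx0, smul_eq_mul]

lemma lev_pos {ρ : ℝ} (h0 : 0 < ρ) (h1 : ρ < 1) :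
    0 < ∫ x in Ioi (0:ℝ), x ^ (-1 - ρ) * (1 - exp (-x)) := by
  have hi := lev_integrable h0 h1 one_pos
  simp only [one_mul] at hi
  have hp : ∀ x ∈ Ioi (0:ℝ), 0 < x ^ (-1 - ρ) * (1 - exp (-x)) := fun x hx => by
    have hx : 0 < x := hx
    have : exp (-x) < 1 := by rw [exp_lt_one_iff]; linarith
    exact mul_pos (rpow_pos_of_pos hx _) (by linarith)
  rw [setIntegral_pos_iff_support_of_nonneg_ae _ hi]
  · have : Ioi (0:ℝ) ⊆ Function.support (fun x : ℝ => x ^ (-1 - ρ) * (1 - exp (-x))) ∩ Ioi 0 :=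
      fun x hx => ⟨(hp x hx).ne', hx⟩
    exact lt_of_lt_of_le (by simp) (measure_mono this)
  · rw [EventuallyLE, ae_restrict_iff' measurableSet_Ioi]
    exact ae_of_all _ fun x hx => (hp x hx).le

lemma stable_exists {ρ : ℝ} (h0 : 0 < ρ) (h1 : ρ ≤ 1) :
    ∃ μ : Measure ℝ, IsProbabilityMeasure μ ∧ μ (Iic 0) = 0 ∧
      ∀ q : ℝ, 0 < q → ∫ x, exp (-(q * x)) ∂μ = exp (-(q ^ ρ)) := by
  rcases h1.eq_or_lt with rfl | h1
  · refine ⟨Measure.dirac 1, inferInstance, by simp, fun q hq => by simp⟩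
  obtain ⟨μ, hμ⟩ := isMom_stable h0 h1
  beta_reduce at hμ
  set C := ∫ x in Ioi (0:ℝ), x ^ (-1 - ρ) * (1 - exp (-x)) with hC
  have hCpos : 0 < C := lev_pos h0 h1
  have hi : ∀ q : ℝ, 0 < q → Integrable (fun x : unitInterval => (x : ℝ) ^ q)
      (μ : Measure unitInterval) := fun q hq => by
    refine Integrable.of_bound (cont_pow q hq).aestronglyMeasurable 1 (ae_of_all _ fun x => ?_)
    rw [norm_of_nonneg (rpow_nonneg x.2.1 _)]
    exact rpow_le_one x.2.1 x.2.2 hq.le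
  have hm0 : (μ : Measure unitInterval) {0} = 0 := by
    have key : ∀ q : ℝ, 0 < q → exp (-(C * q ^ ρ)) ≤
        1 - (μ : Measure unitInterval).real {0} := fun q hq => by
      rw [← hμ q hq, ← probReal_compl_eq_one_sub (measurableSet_singleton _),
        ← integral_indicator_one (measurableSet_singleton _).compl]
      refine integral_mono (hi q hq)
        ((integrable_indicator_iff (measurableSet_singleton _).compl).2
          (integrable_const _).integrableOn) fun x => ?_
      by_cases hx : x = 0
      · subst hx; simp [zero_rpow hq.ne']
      · rw [indicator_of_mem (by simpa using hx)]
        exact rpow_le_one x.2.1 x.2.2 hq.le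
    have ht : Tendsto (fun q : ℝ => exp (-(C * q ^ ρ))) (nhdsWithin 0 (Ioi 0)) (nhds 1) := by
      have hc : Continuous (fun q : ℝ => exp (-(C * q ^ ρ))) :=
        continuous_exp.comp ((continuous_const.mul (continuous_rpow_const h0.le)).neg)
      have := (hc.tendsto 0).mono_left (nhdsWithin_le_nhds (s := Ioi 0))
      simpa [zero_rpow h0.ne'] using this
    have := le_of_tendsto ht (by
      filter_upwards [self_mem_nhdsWithin] with q hq using key q hq)
    have h3 : (μ : Measure unitInterval).real {0} = 0 :=
      le_antisymm (by linarith) measureReal_nonneg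
    rwa [measureReal_eq_zero_iff] at h3
  have hm1 : (μ : Measure unitInterval) {1} = 0 := by
    have key : ∀ q : ℝ, 0 < q → (μ : Measure unitInterval).real {1} ≤
        exp (-(C * q ^ ρ)) := fun q hq => by
      rw [← hμ q hq, ← integral_indicator_one (measurableSet_singleton _)]
      refine integral_mono ((integrable_indicator_iff (measurableSet_singleton _)).2
          (integrable_const _).integrableOn) (hi q hq) fun x => ?_
      by_cases hx : x = 1
      · subst hx; simp
      · rw [indicator_of_notMem (by simpa using hx)]
        exact rpow_nonneg x.2.1 _
    have ht : Tendsto (fun q : ℝ => exp (-(C * q ^ ρ))) atTop (nhds 0) :=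
      tendsto_exp_neg_atTop_nhds_zero.comp
        ((tendsto_rpow_atTop h0).const_mul_atTop hCpos)
    have := ge_of_tendsto ht (by
      filter_upwards [eventually_gt_atTop 0] with q hq using key q hq)
    have h3 : (μ : Measure unitInterval).real {1} = 0 :=
      le_antisymm (by linarith) measureReal_nonneg
    rwa [measureReal_eq_zero_iff] at h3
  have hae : ∀ᵐ x : unitInterval ∂(μ : Measure unitInterval), 0 < (x : ℝ) ∧ (x : ℝ) < 1 := by
    have a0 : ∀ᵐ x : unitInterval ∂(μ : Measure unitInterval), x ≠ 0 := by
      rw [ae_iff]; simpa using hm0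
    have a1 : ∀ᵐ x : unitInterval ∂(μ : Measure unitInterval), x ≠ 1 := by
      rw [ae_iff]; simpa using hm1
    filter_upwards [a0, a1] with x h0 h1
    exact ⟨unitInterval.pos_iff_ne_zero.2 h0, unitInterval.lt_one_iff_ne_one.2 h1⟩
  set c := C ^ (-(1 / ρ)) with hc
  have hcpos : 0 < c := rpow_pos_of_pos hCpos _
  have hcC : C * c ^ ρ = 1 := by
    rw [hc, ← rpow_mul hCpos.le]
    rw [show -(1 / ρ) * ρ = -1 by field_simp, rpow_neg_one]
    exact mul_inv_cancel₀ hCpos.ne'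
  have hf : Measurable (fun x : unitInterval => -log (x : ℝ) * c) :=
    ((measurable_log.comp measurable_subtype_coe).neg).mul_const c
  refine ⟨(μ : Measure unitInterval).map (fun x : unitInterval => -log (x : ℝ) * c),
    Measure.isProbabilityMeasure_map hf.aemeasurable, ?_, fun q hq => ?_⟩
  · rw [Measure.map_apply hf measurableSet_Iic]
    have : ∀ᵐ x : unitInterval ∂(μ : Measure unitInterval), ¬ (-log (x : ℝ) * c ≤ 0) := by
      filter_upwards [hae] with x hx
      have := log_neg hx.1 hx.2
      have := mul_pos (neg_pos.2 this) hcpos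
      linarith
    rw [ae_iff] at this
    simp only [not_not] at this
    exact this
  · rw [integral_map hf.aemeasurable (by fun_prop)]
    have h5 := hμ (q * c) (by positivity)
    rw [mul_rpow hq.le hcpos.le, show C * (q ^ ρ * c ^ ρ) = q ^ ρ * (C * c ^ ρ) by ring, hcC,
      mul_one] at h5
    rw [← h5]
    refine integral_congr_ae ?_
    filter_upwards [hae] with x hx
    rw [rpow_def_of_pos hx.1]
    congr 1; ring

lemma int_exp {μ : Measure ℝ} [IsFiniteMeasure μ] (h0 : μ (Iic 0) = 0) {q : ℝ} (hq : 0 ≤ q) :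
    Integrable (fun x => exp (-(q * x))) μ := by
  refine Integrable.of_bound (by fun_prop) 1 ?_
  have : ∀ᵐ x ∂μ, ¬ (x ≤ 0) := by rw [ae_iff]; simp only [not_not]; exact h0
  filter_upwards [this] with x hx
  rw [norm_of_nonneg (exp_pos _).le, exp_le_one_iff]
  have := mul_nonneg hq (not_le.1 hx).le
  linarith

lemma ae_pos {μ : Measure ℝ} (h0 : μ (Iic 0) = 0) : ∀ᵐ x ∂μ, 0 < x := by
  rw [ae_iff]; simp only [not_lt]; exact h0

lemma subord {ρ : ℝ} (h0 : 0 < ρ) (h1 : ρ ≤ 1) (μ : Measure ℝ) [IsProbabilityMeasure μ]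
    (hμ : μ (Iic 0) = 0) :
    ∃ F : Measure ℝ, IsProbabilityMeasure F ∧ F (Iic 0) = 0 ∧
      ∀ q : ℝ, 0 < q → ∫ x, exp (-(q * x)) ∂F = ∫ y, exp (-(q ^ ρ * y)) ∂μ := by
  obtain ⟨S, hS, hS0, hSL⟩ := stable_exists h0 h1
  have hm : Measurable (fun p : ℝ × ℝ => p.1 ^ (1 / ρ) * p.2) := by fun_prop
  have hpos : ∀ᵐ p ∂(μ.prod S), 0 < p.1 ^ (1 / ρ) * p.2 := by
    have a1 : ∀ᵐ p ∂(μ.prod S), 0 < p.1 := Measure.quasiMeasurePreserving_fst.ae (ae_pos hμ)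
    have a2 : ∀ᵐ p ∂(μ.prod S), 0 < p.2 := Measure.quasiMeasurePreserving_snd.ae (ae_pos hS0)
    filter_upwards [a1, a2] with p h1 h2
    exact mul_pos (rpow_pos_of_pos h1 _) h2
  have hP : IsProbabilityMeasure ((μ.prod S).map (fun p : ℝ × ℝ => p.1 ^ (1 / ρ) * p.2)) :=
    Measure.isProbabilityMeasure_map hm.aemeasurable
  have hF0 : ((μ.prod S).map (fun p : ℝ × ℝ => p.1 ^ (1 / ρ) * p.2)) (Iic 0) = 0 := by
    rw [Measure.map_apply hm measurableSet_Iic]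
    rw [ae_iff] at hpos
    simp only [not_lt] at hpos
    exact hpos
  refine ⟨_, hP, hF0, fun q hq => ?_⟩
  have hint := int_exp hF0 hq.le
  rw [integrable_map_measure (by fun_prop) hm.aemeasurable, Function.comp_def] at hint
  rw [integral_map hm.aemeasurable (by fun_prop), integral_prod _ hint]
  refine integral_congr_ae ?_
  filter_upwards [ae_pos hμ] with y hy
  have := hSL (q * y ^ (1 / ρ)) (mul_pos hq (rpow_pos_of_pos hy _))
  rw [mul_rpow hq.le (rpow_nonneg hy.le _), ← rpow_mul hy.le, one_div_mul_cancel h0.ne',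
    rpow_one] at this
  rw [← this]
  simp only [mul_assoc, Function.comp]

lemma gamma_lap {p : ℝ} (hp : 0 < p) {u : ℝ} (hu : 0 ≤ u) :
    ∫ y, exp (-(u * y)) ∂(ProbabilityTheory.gammaMeasure p 1) = (1 + u) ^ (-p) := by
  have hnn := ProbabilityTheory.gammaPDFReal_nonneg hp one_pos
  rw [ProbabilityTheory.gammaMeasure,
    integral_withDensity_eq_integral_toReal_smul (by
      exact (ProbabilityTheory.measurable_gammaPDFReal p 1).ennreal_ofReal)
      (by simp [ProbabilityTheory.gammaPDF])]
  have h := integral_rpow_mul_exp_neg_mul_Ioi hp (show 0 < 1 + u by linarith)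
  have e : ∀ x, (ProbabilityTheory.gammaPDF p 1 x).toReal • exp (-(u * x)) =
      (Ici (0:ℝ)).indicator
        (fun x => (Real.Gamma p)⁻¹ * (x ^ (p - 1) * exp (-((1 + u) * x)))) x := fun x => by
    rw [ProbabilityTheory.gammaPDF, ENNReal.toReal_ofReal (hnn x), smul_eq_mul,
      ProbabilityTheory.gammaPDFReal]
    by_cases hx : 0 ≤ x
    · rw [if_pos hx, indicator_of_mem (by exact hx)]
      rw [show -((1 + u) * x) = -(1 * x) + -(u * x) by ring, exp_add]
      simp only [one_rpow]; ring
    · rw [if_neg hx, indicator_of_notMem (by exact hx)]; simp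
  simp only [e]
  rw [integral_indicator measurableSet_Ici, integral_Ici_eq_integral_Ioi, integral_const_mul, h,
    one_div, inv_rpow (by linarith), rpow_neg (by linarith)]
  have := (Real.Gamma_pos_of_pos hp).ne'
  field_simp

lemma gamma_zero {p : ℝ} : (ProbabilityTheory.gammaMeasure p 1) (Iic 0) = 0 := by
  rw [ProbabilityTheory.gammaMeasure, withDensity_apply _ measurableSet_Iic,
    setLIntegral_congr (Iio_ae_eq_Iic (a := (0:ℝ))).symm]
  exact ProbabilityTheory.lintegral_gammaPDF_of_nonpos le_rfl

lemma Phi_eq {α u : ℝ} (hα : 0 < α) (hu : 0 < u) :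
    u * (1 + u ^ α) ^ (-(1 / α)) = (1 + u ^ (-α)) ^ (-(1 / α)) := by
  have h1 : 0 < u ^ α := rpow_pos_of_pos hu _
  have : 1 + u ^ α = u ^ α * (1 + u ^ (-α)) := by
    rw [rpow_neg hu.le]; field_simp; ring
  rw [this, mul_rpow h1.le (by have := rpow_pos_of_pos hu (-α); linarith), ← rpow_mul hu.le,
    show α * -(1 / α) = -1 by field_simp, rpow_neg_one, ← mul_assoc, mul_inv_cancel₀ hu.ne',
    one_mul]

lemma Phi_lint {α q : ℝ} (hα : 0 < α) (hq : 0 ≤ q) :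
    ∫⁻ u in Ioi q, ENNReal.ofReal ((1 + u ^ α) ^ (-(1 + 1 / α))) =
      ENNReal.ofReal (1 - q * (1 + q ^ α) ^ (-(1 / α))) := by
  have hcont : ContinuousWithinAt (fun u : ℝ => u * (1 + u ^ α) ^ (-(1 / α))) (Ici q) q := by
    refine continuousWithinAt_id.mul (ContinuousWithinAt.rpow_const ?_ (Or.inl ?_))
    · exact (continuous_const.add (continuous_rpow_const hα.le)).continuousWithinAt
    · have := rpow_nonneg hq α
      positivity
  have hder : ∀ u ∈ Ioi q, HasDerivAt (fun u : ℝ => u * (1 + u ^ α) ^ (-(1 / α)))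
      ((1 + u ^ α) ^ (-(1 + 1 / α))) u := fun u hu => by
    have hu : 0 < u := lt_of_le_of_lt hq hu
    have h1 : 0 < u ^ α := rpow_pos_of_pos hu _
    have h2 : HasDerivAt (fun u : ℝ => 1 + u ^ α) (α * u ^ (α - 1)) u :=
      (hasDerivAt_rpow_const (Or.inl hu.ne')).const_add 1
    have h3 := (hasDerivAt_id u).mul
      (h2.rpow_const (p := -(1 / α)) (Or.inl (by positivity)))
    refine h3.congr_deriv ?_
    have e1 : (1 + u ^ α) ^ (-(1 / α)) = (1 + u ^ α) ^ (-(1 + 1 / α)) * (1 + u ^ α) := by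
      rw [← rpow_add_one (by positivity)]; congr 1; ring
    have e2 : u ^ α = u ^ (α - 1) * u := by
      rw [← rpow_add_one hu.ne']; congr 1; ring
    have e3 : -(1 / α) - 1 = -(1 + 1 / α) := by ring
    rw [e3, e1]
    simp only [id]
    generalize (1 + u ^ α) ^ (-(1 + 1 / α)) = X
    rw [e2]
    field_simp
    ring
  have hnn : ∀ u ∈ Ioi q, 0 ≤ (1 + u ^ α) ^ (-(1 + 1 / α)) := fun u hu => by
    have hu : 0 < u := lt_of_le_of_lt hq hu
    positivity
  have hlim : Tendsto (fun u : ℝ => u * (1 + u ^ α) ^ (-(1 / α))) atTop (nhds 1) := by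
    have h1 : Tendsto (fun u : ℝ => (1 + u ^ (-α)) ^ (-(1 / α))) atTop
        (nhds ((1 + 0) ^ (-(1 / α)))) :=
      ((tendsto_rpow_neg_atTop hα).const_add 1).rpow_const (Or.inl (by norm_num))
    rw [add_zero, one_rpow] at h1
    refine h1.congr' ?_
    filter_upwards [eventually_gt_atTop 0] with u hu
    exact (Phi_eq hα hu).symm
  rw [← ofReal_integral_eq_lintegral_ofReal
    (integrableOn_Ioi_deriv_of_nonneg hcont hder hnn hlim)
    (by rw [EventuallyLE, ae_restrict_iff' measurableSet_Ioi]; exact ae_of_all _ hnn),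
    integral_Ioi_of_hasDerivAt_of_nonneg hcont hder hnn hlim]

lemma base_exists {α : ℝ} (h0 : 0 < α) (h1 : α ≤ 1) :
    ∃ F : Measure ℝ, IsProbabilityMeasure F ∧ F (Iic 0) = 0 ∧
      ∀ q : ℝ, 0 < q → ∫ x, exp (-(q * x)) ∂F = 1 - (1 + q ^ (-α)) ^ (-(1 / α)) := by
  have hp : 0 < 1 + 1 / α := by positivity
  have := ProbabilityTheory.isProbabilityMeasure_gammaMeasure hp one_pos
  obtain ⟨P, hP, hP0, hPL⟩ := subord h0 h1 (ProbabilityTheory.gammaMeasure (1 + 1 / α) 1)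
    gamma_zero
  have hPL' : ∀ u : ℝ, 0 < u → ∫ x, exp (-(u * x)) ∂P = (1 + u ^ α) ^ (-(1 + 1 / α)) :=
    fun u hu => by rw [hPL u hu, gamma_lap hp (rpow_nonneg hu.le _)]
  have key : ∀ q : ℝ, 0 ≤ q → ∫⁻ x, ENNReal.ofReal (1 / x) * ENNReal.ofReal (exp (-(q * x))) ∂P =
      ENNReal.ofReal (1 - q * (1 + q ^ α) ^ (-(1 / α))) := fun q hq => by
    have s1 : ∫⁻ x, ENNReal.ofReal (1 / x) * ENNReal.ofReal (exp (-(q * x))) ∂P =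
        ∫⁻ x, (∫⁻ u in Ioi q, ENNReal.ofReal (exp (-(u * x)))) ∂P := by
      refine lintegral_congr_ae ?_
      filter_upwards [ae_pos hP0] with x hx
      have hi := integrableOn_exp_mul_Ioi (a := -x) (by linarith) q
      have hI := integral_exp_mul_Ioi (a := -x) (by linarith) q
      have e : ∀ u : ℝ, exp (-(u * x)) = exp (-x * u) := fun u => by congr 1; ring
      simp only [e]
      rw [← ofReal_integral_eq_lintegral_ofReal hi (ae_of_all _ fun _ => (exp_pos _).le), hI,
        ← ENNReal.ofReal_mul (by positivity)]
      congr 1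
      field_simp
    rw [s1, lintegral_lintegral_swap (by
      apply Measurable.aemeasurable
      simp only [Function.uncurry_def]
      fun_prop), ← Phi_lint h0 hq]
    refine setLIntegral_congr_fun measurableSet_Ioi fun u hu => ?_
    have hu : 0 < u := lt_of_le_of_lt hq hu
    beta_reduce
    rw [← hPL' u hu, ofReal_integral_eq_lintegral_ofReal (int_exp hP0 hu.le)
      (ae_of_all _ fun _ => (exp_pos _).le)]
  have hmd : Measurable (fun x : ℝ => ENNReal.ofReal (1 / x)) := by fun_prop
  refine ⟨P.withDensity (fun x => ENNReal.ofReal (1 / x)), ⟨?_⟩, ?_, fun q hq => ?_⟩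
  · rw [withDensity_apply _ MeasurableSet.univ, Measure.restrict_univ]
    have := key 0 le_rfl
    simpa using this
  · exact withDensity_absolutelyContinuous _ _ hP0
  · rw [integral_eq_lintegral_of_nonneg_ae (ae_of_all _ fun _ => (exp_pos _).le) (by fun_prop),
      lintegral_withDensity_eq_lintegral_mul _ hmd (by fun_prop)]
    simp only [Pi.mul_apply]
    rw [key q hq.le, Phi_eq h0 hq, ENNReal.toReal_ofReal]
    have h3 := rpow_pos_of_pos hq (-α)
    have : (1 + q ^ (-α)) ^ (-(1 / α)) ≤ 1 :=
      rpow_le_one_of_one_le_of_nonpos (by linarith) (by simp; positivity)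
    linarith

lemma F_exists {α ρ : ℝ} (h0 : 0 < α) (h1 : α ≤ 1) (hρ0 : 0 < ρ) (hρ1 : ρ ≤ 1) :
    ∃ F : Measure ℝ, IsProbabilityMeasure F ∧ F (Iic 0) = 0 ∧
      ∀ q : ℝ, 0 < q → ∫ x in Ioi (0:ℝ), (1 - exp (-(q * x))) ∂F =
        (1 + q ^ (-(ρ * α))) ^ (-(1 / α)) := by
  obtain ⟨G, hG, hG0, hGL⟩ := base_exists h0 h1
  obtain ⟨F, hF, hF0, hFL⟩ := subord hρ0 hρ1 G hG0
  refine ⟨F, hF, hF0, fun q hq => ?_⟩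
  have hr : F.restrict (Ioi 0) = F :=
    Measure.restrict_eq_self_of_ae_mem (ae_pos hF0)
  rw [hr, integral_sub (integrable_const _) (int_exp hF0 hq.le), hFL q hq,
    hGL _ (rpow_pos_of_pos hq _), ← rpow_mul hq.le]
  simp

theorem mittag_leffler_self_similar_solutions
    (γ β ρ : ℝ) (hγ : 1 < γ ∧ γ ≤ 2) (hβ : 0 < β) (hρ : 0 < ρ ∧ ρ ≤ 1) :
    ∃ F : Measure ℝ, IsProbabilityMeasure F ∧ F (Iic 0) = 0 ∧
      (∀ q : ℝ, 0 < q →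
        ∫ x in Ioi (0:ℝ), (1 - exp (-(q * x))) ∂F
          = (1 + q ^ (-(ρ * (γ - 1)))) ^ (-(1 / (γ - 1)))) ∧
      (∀ t : ℝ, 0 < t → ∀ q : ℝ, 0 < q →
        ∫ x in Ioi (0:ℝ), (1 - exp (-(q * x)))
            ∂(ENNReal.ofReal (((γ - 1) * β * t) ^ (1 / (1 - γ))) •
              Measure.map (fun x => x / ((((γ - 1) * β * t) ^ (1 / (1 - γ))) ^ (1 / ρ))) F)
          = ((γ - 1) * β * t + q ^ (-(ρ * (γ - 1)))) ^ (-(1 / (γ - 1)))) ∧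
      (∀ q : ℝ, 0 < q → ∀ t : ℝ, 0 < t →
        HasDerivAt
          (fun s => ((γ - 1) * β * s + q ^ (-(ρ * (γ - 1)))) ^ (-(1 / (γ - 1))))
          (-β * (((γ - 1) * β * t + q ^ (-(ρ * (γ - 1)))) ^ (-(1 / (γ - 1)))) ^ γ) t) ∧
      (∀ q : ℝ, 0 < q →
        Tendsto (fun t => ((γ - 1) * β * t + q ^ (-(ρ * (γ - 1)))) ^ (-(1 / (γ - 1))))
          (nhdsWithin 0 (Ioi 0)) (nhds (q ^ ρ))) := by
  obtain ⟨hγ1, hγ2⟩ := hγ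
  obtain ⟨hρ0, hρ1⟩ := hρ
  have hα : 0 < γ - 1 := by linarith
  obtain ⟨F, hF, hF0, hFL⟩ := F_exists hα (by linarith) hρ0 hρ1
  refine ⟨F, hF, hF0, hFL, fun t ht q hq => ?_, fun q hq t ht => ?_, fun q hq => ?_⟩
  · have hT : 0 < (γ - 1) * β * t := by positivity
    generalize (γ - 1) * β * t = T at hT
    have ha : 0 < T ^ (1 / (1 - γ)) := rpow_pos_of_pos hT _
    set a := T ^ (1 / (1 - γ)) with ha'
    have hb : 0 < a ^ (1 / ρ) := rpow_pos_of_pos ha _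
    set b := a ^ (1 / ρ) with hb'
    have hpre : (fun x : ℝ => x / b) ⁻¹' (Ioi 0) = Ioi 0 := by
      ext x; simp [div_pos_iff_of_pos_right hb]
    rw [Measure.restrict_smul, integral_smul_measure, ENNReal.toReal_ofReal ha.le,
      Measure.restrict_map (by fun_prop) measurableSet_Ioi, hpre,
      integral_map (by fun_prop) (by fun_prop)]
    have h := hFL (q / b) (by positivity)
    have e : ∀ x : ℝ, q / b * x = q * (x / b) := fun x => by ring
    simp only [e] at h
    rw [h, smul_eq_mul, div_rpow hq.le hb.le]
    have e1 : b ^ (-(ρ * (γ - 1))) = T := by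
      have : 1 - γ ≠ 0 := by linarith
      rw [hb', ← rpow_mul ha.le, ha', ← rpow_mul hT.le,
        show 1 / (1 - γ) * (1 / ρ * -(ρ * (γ - 1))) = 1 by field_simp; ring, rpow_one]
    rw [e1]
    have hQ := rpow_pos_of_pos hq (-(ρ * (γ - 1)))
    rw [ha', show 1 / (1 - γ) = -(1 / (γ - 1)) by
      rw [← neg_sub, one_div, one_div, inv_neg]; try ring, ← mul_rpow hT.le (by positivity)]
    congr 1
    field_simp
  · have hQ := rpow_pos_of_pos hq (-(ρ * (γ - 1)))
    have hT : 0 < (γ - 1) * β * t + q ^ (-(ρ * (γ - 1))) := by positivity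
    have h2 : HasDerivAt (fun s : ℝ => (γ - 1) * β * s + q ^ (-(ρ * (γ - 1))))
        ((γ - 1) * β) t := by
      simpa using ((hasDerivAt_id t).const_mul ((γ - 1) * β)).add_const (q ^ (-(ρ * (γ - 1))))
    refine (h2.rpow_const (p := -(1 / (γ - 1))) (Or.inl hT.ne')).congr_deriv ?_
    rw [← rpow_mul hT.le,
      show -(1 / (γ - 1)) * γ = -(1 / (γ - 1)) - 1 by field_simp; ring]
    field_simp
  · have hQ := rpow_pos_of_pos hq (-(ρ * (γ - 1)))
    have h1 : Tendsto (fun t : ℝ => (γ - 1) * β * t + q ^ (-(ρ * (γ - 1))))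
        (nhds 0) (nhds ((γ - 1) * β * 0 + q ^ (-(ρ * (γ - 1))))) :=
      Continuous.tendsto (by fun_prop) 0
    rw [mul_zero, zero_add] at h1
    have h2 := (h1.rpow_const (p := -(1 / (γ - 1))) (Or.inl hQ.ne')).mono_left
      (nhdsWithin_le_nhds (s := Ioi 0))
    rw [← rpow_mul hq.le, show -(ρ * (γ - 1)) * -(1 / (γ - 1)) = ρ by field_simp] at h2
    exact h2
end
end

section
/- Let r, s > 0 and suppose F is a Borel probability measure on (0,∞) such that ∫_{(0,∞)} (1 − e^{−qx}) F(dx) = (1 + q^{−s})^{−r} for all q > 0. Then for every x > 0, F((0,x]) = Σ_{k=1}^∞ ((r)_k / k!) · (−1)^{k+1} x^{sk} / Γ(sk + 1), where (r)_k = r(r+1)(r+2)⋯(r+k−1) is the rising factorial and Γ is the Gamma function; in particular this series converges for every x > 0. -/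
open MeasureTheory Set Filter Real

noncomputable section

theorem lap_mgf (μ ν : Measure ℝ) [IsFiniteMeasure μ] [IsFiniteMeasure ν]
    (hμ : ∀ t < (1:ℝ), Integrable (fun x => exp (t * x)) μ)
    (hν : ∀ t < (1:ℝ), Integrable (fun x => exp (t * x)) ν)
    (h : ∀ t < (1:ℝ), ∫ x, exp (t * x) ∂μ = ∫ x, exp (t * x) ∂ν) : μ = ν := by
  apply Measure.ext_of_charFun
  have sub : ∀ (κ : Measure ℝ), (∀ t < (1:ℝ), Integrable (fun x => exp (t * x)) κ) →
      {z : ℂ | z.re < 1} ⊆ {z | z.re ∈ interior (ProbabilityTheory.integrableExpSet id κ)} := by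
    intro κ hκ z hz
    refine mem_interior.2 ⟨Iio 1, fun t ht => ?_, isOpen_Iio, hz⟩
    exact hκ t ht
  have hX : AnalyticOnNhd ℂ (ProbabilityTheory.complexMGF id μ) {z : ℂ | z.re < 1} :=
    ProbabilityTheory.analyticOnNhd_complexMGF.mono (sub μ hμ)
  have hY : AnalyticOnNhd ℂ (ProbabilityTheory.complexMGF id ν) {z : ℂ | z.re < 1} :=
    ProbabilityTheory.analyticOnNhd_complexMGF.mono (sub ν hν)
  have key : EqOn (ProbabilityTheory.complexMGF id μ) (ProbabilityTheory.complexMGF id ν)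
      {z : ℂ | z.re < 1} := by
    refine AnalyticOnNhd.eqOn_of_preconnected_of_frequently_eq hX hY
      ((convex_halfSpace_re_lt 1).isPreconnected) (z₀ := ((0:ℝ) : ℂ)) (by simp) ?_
    have h_real : ∃ᶠ (x : ℝ) in nhdsWithin 0 {0}ᶜ, ProbabilityTheory.complexMGF id μ x
        = ProbabilityTheory.complexMGF id ν x := by
      refine Eventually.frequently ?_
      have : ∀ᶠ x : ℝ in nhds 0, x < 1 := Iio_mem_nhds one_pos
      filter_upwards [nhdsWithin_le_nhds this] with y hy
      rw [ProbabilityTheory.complexMGF_ofReal, ProbabilityTheory.complexMGF_ofReal]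
      exact congrArg _ (h y hy)
    rw [frequently_iff_seq_forall] at h_real ⊢
    obtain ⟨xs, hx_tendsto, hx_eq⟩ := h_real
    refine ⟨fun n ↦ xs n, ?_, fun n ↦ ?_⟩
    · rw [tendsto_nhdsWithin_iff] at hx_tendsto ⊢
      constructor
      · exact (Complex.continuous_ofReal.tendsto 0).comp hx_tendsto.1
      · simpa using hx_tendsto.2
    · simp [hx_eq]
  ext t
  rw [← ProbabilityTheory.complexMGF_id_mul_I, ← ProbabilityTheory.complexMGF_id_mul_I]
  exact key (by simp)

theorem lap_unique (A B : ℝ → ENNReal) (hA : Measurable A) (hB : Measurable B)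
    (h : ∀ q : ℝ, 1 < q → ∫⁻ x in Ioi 0, ENNReal.ofReal (exp (-(q * x))) * A x =
      ∫⁻ x in Ioi 0, ENNReal.ofReal (exp (-(q * x))) * B x)
    (hfin : ∀ q : ℝ, 1 < q → ∫⁻ x in Ioi 0, ENNReal.ofReal (exp (-(q * x))) * B x ≠ ⊤) :
    A =ᵐ[volume.restrict (Ioi 0)] B := by
  set e : ℝ → ENNReal := fun x => ENNReal.ofReal (exp (-(2 * x))) with he
  have hem : Measurable e := by fun_prop
  have lt : ∀ (C : ℝ → ENNReal) (hC : Measurable C) (t : ℝ),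
      ∫⁻ x, ENNReal.ofReal (exp (t * x)) ∂((volume.restrict (Ioi 0)).withDensity (e * C)) =
      ∫⁻ x in Ioi 0, ENNReal.ofReal (exp (-((2 - t) * x))) * C x := by
    intro C hC t
    rw [lintegral_withDensity_eq_lintegral_mul _ (hem.mul hC) (by fun_prop)]
    refine lintegral_congr fun x => ?_
    simp only [Pi.mul_apply, he]
    rw [mul_right_comm, ← ENNReal.ofReal_mul (exp_pos _).le, ← exp_add]
    congr 3; ring
  have fin : ∀ (C : ℝ → ENNReal) (hC : Measurable C)
      (_ : ∀ q : ℝ, 1 < q → ∫⁻ x in Ioi 0, ENNReal.ofReal (exp (-(q * x))) * C x ≠ ⊤),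
      IsFiniteMeasure ((volume.restrict (Ioi 0)).withDensity (e * C)) ∧
      ∀ t < (1:ℝ), Integrable (fun x => exp (t * x))
        ((volume.restrict (Ioi 0)).withDensity (e * C)) := by
    intro C hC hf
    constructor
    · apply isFiniteMeasure_withDensity
      simpa [he] using hf 2 (by norm_num)
    · intro t ht
      refine ⟨by fun_prop, ?_⟩
      rw [hasFiniteIntegral_iff_ofReal (ae_of_all _ fun x => (exp_pos _).le), lt C hC]
      exact (hf _ (by linarith)).lt_top
  obtain ⟨f1, i1⟩ := fin A hA (fun q hq => by rw [h q hq]; exact hfin q hq)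
  obtain ⟨f2, i2⟩ := fin B hB hfin
  have key := lap_mgf _ _ i1 i2 (by
    intro t ht
    rw [integral_eq_lintegral_of_nonneg_ae (ae_of_all _ fun x => (exp_pos _).le) (by fun_prop),
      integral_eq_lintegral_of_nonneg_ae (ae_of_all _ fun x => (exp_pos _).le) (by fun_prop),
      lt A hA, lt B hB, h _ (by linarith)])
  rw [withDensity_eq_iff_of_sigmaFinite (hem.mul hA).aemeasurable (hem.mul hB).aemeasurable] at key
  filter_upwards [key] with x hx
  simp only [Pi.mul_apply, he] at hx
  exact (ENNReal.mul_right_inj (by simp [exp_pos]) ENNReal.ofReal_ne_top).1 hx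

theorem lap_cdf (F : Measure ℝ) (hFp : IsProbabilityMeasure F) (hFc : F (Iic 0) = 0)
    (L : ℝ) (q : ℝ) (hq : 0 < q)
    (hlap : ∫ x in Ioi (0:ℝ), (1 - exp (-(q * x))) ∂F = L) :
    ∫⁻ x in Ioi 0, ENNReal.ofReal (exp (-(q * x))) * F (Iic x) = ENNReal.ofReal ((1 - L) / q) := by
  have hae : ∀ᵐ y ∂F, y ∈ Ioi (0:ℝ) := by
    rw [ae_iff]; simpa [Iic] using hFc
  rw [Measure.restrict_eq_self_of_ae_mem hae] at hlap
  have hint : Integrable (fun x => exp (-(q * x))) F := by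
    refine Integrable.mono' (integrable_const (1:ℝ)) (by fun_prop) ?_
    filter_upwards [hae] with y hy
    rw [norm_of_nonneg (exp_pos _).le, exp_le_one_iff]
    have : 0 < q * y := mul_pos hq hy
    linarith
  rw [integral_sub (integrable_const _) hint] at hlap
  simp only [integral_const, probReal_univ, smul_eq_mul, one_mul] at hlap
  have e1 : ∀ x, ENNReal.ofReal (exp (-(q * x))) * F (Iic x) =
      ∫⁻ y, ENNReal.ofReal (exp (-(q * x))) * (if y ≤ x then 1 else 0) ∂F := by
    intro x
    rw [lintegral_const_mul _ (by exact Measurable.ite measurableSet_Iic measurable_const measurable_const)]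
    congr 1
    rw [← lintegral_indicator_one measurableSet_Iic]
    rfl
  simp_rw [e1]
  rw [lintegral_lintegral_swap (by
    refine Measurable.aemeasurable ?_
    refine Measurable.mul (by fun_prop) ?_
    exact Measurable.ite (measurableSet_le measurable_snd measurable_fst) measurable_const measurable_const)]
  have e2 : ∀ᵐ y ∂F, ∫⁻ x in Ioi 0, ENNReal.ofReal (exp (-(q * x))) * (if y ≤ x then 1 else 0) =
      ENNReal.ofReal (exp (-(q * y)) / q) := by
    filter_upwards [hae] with y hy
    have : ∀ x, ENNReal.ofReal (exp (-(q * x))) * (if y ≤ x then 1 else 0) =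
      (Ici y).indicator (fun x => ENNReal.ofReal (exp (-(q * x)))) x := by
      intro x; by_cases h : y ≤ x <;> simp [h]
    simp_rw [this]
    rw [lintegral_indicator measurableSet_Ici, Measure.restrict_restrict measurableSet_Ici,
      inter_eq_left.2 (show Ici y ⊆ Ioi 0 from fun z hz => mem_Ioi.2 (lt_of_lt_of_le (mem_Ioi.1 hy) (mem_Ici.1 hz))), ← restrict_Ioi_eq_restrict_Ici]
    have h1 := integral_exp_mul_Ioi (a := -q) (by linarith) y
    have h2 := integrableOn_exp_mul_Ioi (a := -q) (by linarith) y
    simp_rw [neg_mul] at h1 h2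
    rw [← ofReal_integral_eq_lintegral_ofReal h2 (ae_of_all _ fun x => (exp_pos _).le), h1]
    congr 1; field_simp
  rw [lintegral_congr_ae e2, ← ofReal_integral_eq_lintegral_ofReal (hint.div_const q)
    (ae_of_all _ fun x => by positivity), integral_div]
  congr 2; linarith

theorem binom (r u : ℝ) (hu0 : 0 < u) (hu : u < 1) :
    HasSum (fun k : ℕ => Polynomial.eval r (ascPochhammer ℝ (k + 1)) / ((k + 1).factorial : ℝ) *
      ((-1) ^ k * u ^ (k + 1))) (1 - (1 + u) ^ (-r)) := by
  have h := (Real.one_add_rpow_hasFPowerSeriesOnBall_zero (a := -r)).hasSum (y := u) (by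
    simp [enorm_eq_nnnorm]; rw [← NNReal.coe_lt_coe]; simpa [abs_of_pos hu0] using hu)
  have hc : ∀ n, Ring.choose (-r) n = (-1) ^ n * (Polynomial.eval r (ascPochhammer ℝ n) / (n.factorial : ℝ)) := by
    intro n
    have := Ring.factorial_nsmul_multichoose_eq_ascPochhammer r n
    rw [Polynomial.ascPochhammer_smeval_eq_eval] at this
    rw [Ring.choose_neg', ← this]
    have : (n.factorial : ℝ) ≠ 0 := by positivity
    simp [Int.negOnePow, Units.smul_def]
    field_simp
  simp only [binomialSeries_apply, hc, zero_add] at h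
  rw [hasSum_nat_add_iff' 1 |>.symm] at h
  have h2 := h.neg
  have e1 : ∀ n : ℕ, (List.ofFn fun _ : Fin n => u).prod = u ^ n := fun n => by
    rw [List.ofFn_const, List.prod_replicate]
  simp only [e1, smul_eq_mul, Finset.sum_range_one, pow_zero, ascPochhammer_zero, Polynomial.eval_one,
    Nat.factorial_zero, Nat.cast_one, div_one, mul_one, neg_sub] at h2
  refine HasSum.congr_fun h2 ?_
  intro k
  ring

theorem lap_term (c a q : ℝ) (hc : 0 < c) (ha : 0 < a) (hq : 0 < q) :
    ∫⁻ x in Ioi 0, ENNReal.ofReal (exp (-(q * x))) * ENNReal.ofReal (c * (x ^ a / Gamma (a + 1)))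
      = ENNReal.ofReal (c * q ^ (-a) / q) := by
  have hG : 0 < Gamma (a + 1) := Gamma_pos_of_pos (by linarith)
  have key := integral_rpow_mul_exp_neg_mul_Ioi (a := a + 1) (by linarith) hq
  have hint : IntegrableOn (fun x : ℝ => x ^ (a + 1 - 1) * exp (-(q * x))) (Ioi 0) :=
    .of_integral_ne_zero (by rw [key]; positivity)
  have e : ∀ x, ENNReal.ofReal (exp (-(q * x))) * ENNReal.ofReal (c * (x ^ a / Gamma (a + 1))) =
      ENNReal.ofReal ((c / Gamma (a + 1)) * (x ^ (a + 1 - 1) * exp (-(q * x)))) := by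
    intro x
    rw [← ENNReal.ofReal_mul (exp_pos _).le, add_sub_cancel_right]
    congr 1; ring
  simp_rw [e]
  rw [← ofReal_integral_eq_lintegral_ofReal (hint.const_mul _), integral_const_mul, key]
  · congr 1
    rw [rpow_add (by positivity), one_div, inv_rpow hq.le, rpow_one, rpow_neg hq.le]
    field_simp
  · filter_upwards [ae_restrict_mem measurableSet_Ioi] with x hx
    have : 0 < x := hx
    simp only [Pi.zero_apply]
    positivity

theorem freq_of_ae (p : ℝ → Prop) (h : ∀ᵐ x ∂(volume.restrict (Ioi (0:ℝ))), p x) (x : ℝ) (hx : 0 < x) :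
    ∃ᶠ y in nhdsWithin x (Ioi x), p y := by
  intro hn
  obtain ⟨b, hb, hsub⟩ := (mem_nhdsGT_iff_exists_Ioo_subset).1 hn
  rw [ae_restrict_iff' measurableSet_Ioi, ae_iff] at h
  have : volume (Ioo x b) = 0 := by
    refine measure_mono_null (fun y hy => ?_) h
    simp only [mem_ofPred_eq, Classical.not_imp]
    exact ⟨hx.trans hy.1, hsub hy⟩
  rw [Real.volume_Ioo, ENNReal.ofReal_eq_zero] at this
  have : x < b := hb
  linarith

set_option maxHeartbeats 1000000 in
theorem main_aux (r s : ℝ) (hs : 0 < s) (c : ℕ → ℝ) (hc : ∀ k, 0 < c k)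
    (hbin : ∀ u : ℝ, 0 < u → u < 1 →
      HasSum (fun k : ℕ => c k * ((-1) ^ k * u ^ (k + 1))) (1 - (1 + u) ^ (-r)))
    (F : Measure ℝ) (hFp : IsProbabilityMeasure F) (hFc : F (Iic 0) = 0)
    (hlap : ∀ q : ℝ, 0 < q →
      ∫ x in Ioi (0:ℝ), (1 - exp (-(q * x))) ∂F = (1 + q ^ (-s)) ^ (-r)) (x : ℝ) (hx : 0 < x) :
    Summable (fun k : ℕ => c k * ((-1 : ℝ) ^ k * x ^ (s * (k + 1)) / Gamma (s * (k + 1) + 1))) ∧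
      (F (Ioc 0 x)).toReal =
        ∑' k : ℕ, c k * ((-1 : ℝ) ^ k * x ^ (s * (k + 1)) / Gamma (s * (k + 1) + 1)) := by
  have ha : ∀ k : ℕ, 0 < s * ((k:ℝ) + 1) := fun k => by positivity
  have hG : ∀ k : ℕ, 0 < Gamma (s * ((k:ℝ) + 1) + 1) := fun k => Gamma_pos_of_pos (by linarith [ha k])
  set t : ℕ → ℝ → ℝ := fun k x => c k * (x ^ (s * ((k:ℝ) + 1)) / Gamma (s * ((k:ℝ) + 1) + 1)) with ht
  have htpos : ∀ k y, 0 < y → 0 ≤ t k y := fun k y hy => by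
    have := hc k
    have := hG k
    simp only [ht]; positivity
  have htm : ∀ k, Measurable (t k) := fun k => by simp only [ht]; fun_prop
  have htmono : ∀ k y z, 0 < y → y ≤ z → t k y ≤ t k z := fun k y z hy hyz => by
    have := hc k
    have := hG k
    have := ha k
    simp only [ht]; gcongr
  set T : ℕ → ℝ → ENNReal := fun k x => ENNReal.ofReal (t k x) with hT
  have hTm : ∀ k, Measurable (T k) := fun k => (htm k).ennreal_ofReal
  have hTint : ∀ q : ℝ, 0 < q → ∀ k, ∫⁻ x in Ioi 0, ENNReal.ofReal (exp (-(q * x))) * T k x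
      = ENNReal.ofReal (c k * (q ^ (-s)) ^ (k + 1) / q) := fun q hq k => by
    rw [lap_term _ _ _ (hc k) (ha k) hq, ← rpow_natCast, ← rpow_mul hq.le]
    congr 4; push_cast; ring
  have hsumint : ∀ q : ℝ, 0 < q → ∀ g : ℕ → ℕ,
      ∫⁻ x in Ioi 0, ENNReal.ofReal (exp (-(q * x))) * ∑' k, T (g k) x
      = ∑' k, ENNReal.ofReal (c (g k) * (q ^ (-s)) ^ (g k + 1) / q) := fun q hq g => by
    simp_rw [← ENNReal.tsum_mul_left]
    have hm : ∀ k, AEMeasurable (fun x => ENNReal.ofReal (exp (-(q * x))) * T (g k) x)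
      (volume.restrict (Ioi 0)) := fun k => (Measurable.mul (by fun_prop) (hTm _)).aemeasurable
    rw [lintegral_tsum hm]
    exact tsum_congr fun k => hTint q hq _
  have hu : ∀ q : ℝ, 1 < q → 0 < q ^ (-s) ∧ q ^ (-s) < 1 := fun q hq =>
    ⟨rpow_pos_of_pos (by linarith) _, rpow_lt_one_of_one_lt_of_neg hq (by linarith)⟩
  have habs : ∀ q : ℝ, 1 < q → Summable fun k => c k * (q ^ (-s)) ^ (k + 1) / q := fun q hq => by
    have := (hbin _ (hu q hq).1 (hu q hq).2).summable.abs
    refine Summable.div_const (this.congr fun k => ?_) q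
    rw [abs_mul, abs_mul, abs_pow, abs_neg, abs_one, one_pow, one_mul, abs_of_pos (hc k),
      abs_of_pos (pow_pos (hu q hq).1 _)]
  have hpos : ∀ q : ℝ, 1 < q → ∀ k, 0 ≤ c k * (q ^ (-s)) ^ (k + 1) / q := fun q hq k => by
    have := hc k
    have := (hu q hq).1
    have : 0 < q := by linarith
    positivity
  have hinj0 : Function.Injective fun k : ℕ => 2 * k := fun a b h => by simpa using h
  have hinj1 : Function.Injective fun k : ℕ => 2 * k + 1 := fun a b h => by simpa using h
  -- summability everywhere
  have hsummable : ∀ y, 0 < y → Summable fun k => t k y := by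
    have hfin : ∫⁻ x in Ioi 0, ENNReal.ofReal (exp (-(2 * x))) * ∑' k, T k x ≠ ⊤ := by
      have h2 := hsumint 2 two_pos id
      simp only [id] at h2
      rw [h2]
      exact (habs 2 one_lt_two).tsum_ofReal_ne_top
    have hae := ae_lt_top' (by
      exact (Measurable.mul (by fun_prop) (Measurable.tsum hTm)).aemeasurable) hfin
    intro y hy
    obtain ⟨z, hz1, hz2⟩ := ((freq_of_ae _ hae y hy).and_eventually self_mem_nhdsWithin).exists
    have hz : y < z := hz2
    have hTz : ∑' k, T k z ≠ ⊤ := by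
      intro h
      rw [h, ENNReal.mul_top (by simp [exp_pos])] at hz1
      exact lt_irrefl _ hz1
    have hsz : Summable fun k => t k z := by
      have := ENNReal.summable_toReal hTz
      refine this.congr fun k => ?_
      exact ENNReal.toReal_ofReal (htpos k z (hy.trans hz))
    exact Summable.of_nonneg_of_le (fun k => htpos k y hy) (fun k => htmono k y z hy hz.le) hsz
  have hae := lap_unique (fun x => F (Iic x) + ∑' k, T (2 * k + 1) x) (fun x => ∑' k, T (2 * k) x)
    (by
      refine Measurable.add ?_ (Measurable.tsum fun k => hTm _)
      exact Monotone.measurable fun a b h => measure_mono (Iic_subset_Iic.2 h))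
    (Measurable.tsum fun k => hTm _)
    (by
      intro q hq
      have hq0 : 0 < q := by linarith
      have hb := hbin _ (hu q hq).1 (hu q hq).2
      have h0 := (habs q hq).comp_injective hinj0
      have h1 := (habs q hq).comp_injective hinj1
      simp only [Function.comp_def] at h0 h1
      simp_rw [mul_add]
      have hm : Measurable (fun x => ENNReal.ofReal (exp (-(q * x))) * ∑' k, T (2 * k + 1) x) :=
        Measurable.mul (by fun_prop) (Measurable.tsum fun k => hTm _)
      rw [lintegral_add_right _ hm,
        lap_cdf F hFp hFc _ q hq0 (hlap q hq0), hsumint q hq0 (fun k => 2 * k + 1),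
        hsumint q hq0 (fun k => 2 * k), ← ENNReal.ofReal_tsum_of_nonneg (fun k => hpos q hq _) h1,
        ← ENNReal.ofReal_tsum_of_nonneg (fun k => hpos q hq _) h0, ← ENNReal.ofReal_add]
      · congr 1
        have hb' := hb.div_const q
        rw [← hb'.tsum_eq, ← tsum_even_add_odd (hb'.summable.comp_injective hinj0)
          (hb'.summable.comp_injective hinj1)]
        have e0 : ∀ k : ℕ, c (2 * k) * ((-1) ^ (2 * k) * (q ^ (-s)) ^ (2 * k + 1)) / q
          = c (2 * k) * (q ^ (-s)) ^ (2 * k + 1) / q := fun k => by simp [pow_mul]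
        have e1 : ∀ k : ℕ, c (2 * k + 1) * ((-1) ^ (2 * k + 1) * (q ^ (-s)) ^ (2 * k + 1 + 1)) / q
          = - (c (2 * k + 1) * (q ^ (-s)) ^ (2 * k + 1 + 1) / q) := fun k => by
            rw [pow_succ (-1 : ℝ), pow_mul]; norm_num; ring
        simp_rw [e0, e1]
        rw [tsum_neg]; ring
      · apply div_nonneg _ hq0.le
        rw [← hlap q hq0]
        have hle : ∫ x in Ioi (0:ℝ), (1 - exp (-(q * x))) ∂F ≤ ∫ x in Ioi (0:ℝ), 1 ∂F := by
          refine integral_mono_of_nonneg ?_ (integrable_const _) (ae_of_all _ fun x => ?_)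
          · filter_upwards [ae_restrict_mem measurableSet_Ioi] with y hy
            have : 0 < q * y := mul_pos hq0 hy
            simp only [Pi.zero_apply, sub_nonneg, exp_le_one_iff]; linarith
          · have := exp_pos (-(q * x)); simp only; linarith
        have : ∫ x in Ioi (0:ℝ), (1:ℝ) ∂F ≤ 1 := by
          simp
        linarith
      · exact tsum_nonneg fun k => hpos q hq _)
    (by
      intro q hq
      rw [hsumint q (by linarith) (fun k => 2 * k)]
      exact ((habs q hq).comp_injective hinj0).tsum_ofReal_ne_top)
  set f : ℕ → ℝ → ℝ := fun k x => (-1) ^ k * t k x with hf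
  have hfs : ∀ y, 0 < y → Summable fun k => f k y := fun y hy => by
    refine Summable.of_abs ((hsummable y hy).congr fun k => ?_)
    simp [hf, abs_mul, abs_of_nonneg (htpos k y hy)]
  have hfeq : ∀ y, (fun k : ℕ => c k * ((-1 : ℝ) ^ k * y ^ (s * (k + 1)) / Gamma (s * (k + 1) + 1)))
      = fun k => f k y := fun y => by ext k; simp only [hf, ht]; ring
  rw [hfeq]
  refine ⟨hfs x hx, ?_⟩
  have hae2 : ∀ᵐ y ∂(volume.restrict (Ioi (0:ℝ))), ProbabilityTheory.cdf F y = ∑' k, f k y := by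
    filter_upwards [hae, ae_restrict_mem measurableSet_Ioi] with y hy hy0
    have hy0 : 0 < y := hy0
    have h0 := (hsummable y hy0).comp_injective hinj0
    have h1 := (hsummable y hy0).comp_injective hinj1
    simp only [Function.comp_def] at h0 h1
    simp only [hT] at hy
    rw [← ENNReal.ofReal_tsum_of_nonneg (fun k => htpos _ y hy0) h1,
        ← ENNReal.ofReal_tsum_of_nonneg (fun k => htpos _ y hy0) h0] at hy
    have hy' := congrArg ENNReal.toReal hy
    rw [ENNReal.toReal_add (measure_ne_top _ _) ENNReal.ofReal_ne_top,
      ENNReal.toReal_ofReal (tsum_nonneg fun k => htpos _ y hy0),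
      ENNReal.toReal_ofReal (tsum_nonneg fun k => htpos _ y hy0)] at hy'
    have g0 := (hfs y hy0).comp_injective hinj0
    have g1 := (hfs y hy0).comp_injective hinj1
    have g2 : ∑' k, f (2 * k) y + ∑' k, f (2 * k + 1) y = ∑' k, f k y :=
      tsum_even_add_odd (f := fun k => f k y) g0 g1
    rw [ProbabilityTheory.cdf_eq_real, ← g2]
    have e0 : ∀ k : ℕ, f (2 * k) y = t (2 * k) y := fun k => by simp [hf, pow_mul]
    have e1 : ∀ k : ℕ, f (2 * k + 1) y = - t (2 * k + 1) y := fun k => by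
      simp [hf, pow_succ, pow_mul]
    simp_rw [e0, e1]
    rw [tsum_neg, Measure.real]; linarith
  have hcont : ContinuousOn (fun y => ∑' k, f k y) (Ioo 0 (x + 1)) := by
    refine continuousOn_tsum (u := fun k => t k (x + 1)) (fun k => ?_) (hsummable _ (by linarith)) ?_
    · simp only [hf, ht]
      refine continuousOn_const.mul (continuousOn_const.mul (ContinuousOn.div_const ?_ _))
      exact (continuous_rpow_const (ha k).le).continuousOn
    · intro k y hy
      rw [norm_mul, norm_pow, norm_neg, norm_one, one_pow, one_mul, norm_of_nonneg (htpos k y hy.1)]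
      exact htmono k _ _ hy.1 hy.2.le
  have hG' := (hcont.continuousAt (Ioo_mem_nhds hx (by linarith : x < x + 1))).tendsto.mono_left
    (nhdsWithin_le_nhds (s := Ioi x))
  have hH := ((ProbabilityTheory.cdf F).right_continuous x).tendsto.mono_left
    (nhdsWithin_mono x Ioi_subset_Ici_self)
  rw [← tendsto_nhds_unique_of_frequently_eq hH hG' (freq_of_ae _ hae2 x hx),
    ProbabilityTheory.cdf_eq_real, Measure.real, ← Iic_union_Ioc_eq_Iic hx.le,
    measure_union (by
      rw [Set.disjoint_left]; intro a h1 h2; exact absurd h2.1 (not_lt.2 h1)) measurableSet_Ioc, hFc,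
    zero_add]

/-- a probability measure on `(0,∞)` whose Laplace transform of
`1 - e^{-qx}` equals `(1 + q^{-s})^{-r}` has the generalized Mittag-Leffler
distribution function
`F((0,x]) = Σ_{k≥1} ((r)_k/k!) (-1)^{k+1} x^{sk} / Γ(sk+1)`, the series
converging for every `x > 0`. -/
theorem generalized_mittag_leffler_series
    (r s : ℝ) (hr : 0 < r) (hs : 0 < s)
    (F : Measure ℝ) (hFp : IsProbabilityMeasure F) (hFc : F (Iic 0) = 0)
    (hlap : ∀ q : ℝ, 0 < q →
      ∫ x in Ioi (0:ℝ), (1 - exp (-(q * x))) ∂F = (1 + q ^ (-s)) ^ (-r)) :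
    ∀ x : ℝ, 0 < x →
      Summable (fun k : ℕ =>
        (Polynomial.eval r (ascPochhammer ℝ (k + 1)) / ((k + 1).factorial : ℝ)) *
          ((-1 : ℝ) ^ k * x ^ (s * (k + 1)) / Real.Gamma (s * (k + 1) + 1))) ∧
      (F (Ioc 0 x)).toReal = ∑' k : ℕ,
        (Polynomial.eval r (ascPochhammer ℝ (k + 1)) / ((k + 1).factorial : ℝ)) *
          ((-1 : ℝ) ^ k * x ^ (s * (k + 1)) / Real.Gamma (s * (k + 1) + 1)) := by
  intro x hx
  exact main_aux r s hs
    (fun k => Polynomial.eval r (ascPochhammer ℝ (k + 1)) / ((k + 1).factorial : ℝ))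
    (fun k => div_pos (ascPochhammer_pos _ _ hr) (by positivity))
    (fun u h0 h1 => binom r u h0 h1) F hFp hFc hlap x hx
end
end
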